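/- arXiv:2310.00361 — 7 statements merged into one kernel-verified Lean document; each statement's English description precedes it below -/
import Mathlib

section
/- Let μ be the normalized Haar probability measure on the unitary group U(d). For arbitrary d×d complex matrices A, B, C, D, ∫ Tr[W A W† B W C W† D] dμ(W) = (1/(d²−1))·(Tr[A]Tr[C]Tr[BD] + Tr[AC]Tr[B]Tr[D]) − (1/(d(d²−1)))·(Tr[A]Tr[B]Tr[C]Tr[D] + Tr[AC]Tr[BD]). -/
/-!
For fixed `A` and `C`, the integral is a bilinear form `g (B, D)`. Left invariance of the Haar
measure makes `g` invariant under simultaneous unitary conjugation of `B` and `D`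
(`trace_conj_left`). Such a form must be `a * Tr B * Tr D + b * Tr (B * D)` (`invariant_bilin`), and
the constants follow from two contractions computed pointwise in `W`: `g 1 1 = Tr (A * C)` and
`∑ g E_ij E_ji = Tr A * Tr C`, that is, `a d² + b d = Tr (A * C)` and `a d + b d² = Tr A * Tr C`.

The classification of invariant forms passes to the Lie algebra. Conjugation by the unitaries
`(1 - P) + z P`, for a Hermitian projection `P` and `|z| = 1`, yields
`g ([P, B], D) + g (B, [P, D]) = 0` (`infinitesimal_proj`), hence the same identity with any matrix
unit in place of `P` (`infinitesimal_single`). Contracting indices in the resulting relations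
between the values `g (E_ij, E_kl)` determines these values up to the two constants.
-/

open MeasureTheory Matrix

noncomputable instance {ι : Type*} [Fintype ι] [DecidableEq ι] :
    MeasurableSpace (Matrix.unitaryGroup ι ℂ) := borel _

instance {ι : Type*} [Fintype ι] [DecidableEq ι] :
    BorelSpace (Matrix.unitaryGroup ι ℂ) := ⟨rfl⟩

section

variable {n : Type*} [Fintype n] [DecidableEq n]

/-- Invariance of `g` under conjugation by the circle of unitaries `(1 - P) + z P` gives invariance
under the derivation `[P, ·]`. As a function of `z` on the unit circle, the conjugated value of `g`
is a Laurent polynomial of degree at most `2`; being constant, its coefficients of `z ^ (±1)` and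
`z ^ (±2)` vanish, and the claim is a combination of these. -/
lemma infinitesimal_proj (g : Matrix n n ℂ →ₗ[ℂ] Matrix n n ℂ →ₗ[ℂ] ℂ)
    (hg : ∀ V ∈ unitaryGroup n ℂ, ∀ B D, g (V * B * star V) (V * D * star V) = g B D)
    (P : Matrix n n ℂ) (hP : P * P = P) (hs : star P = P) (B D : Matrix n n ℂ) :
    g (P * B - B * P) D + g B (P * D - D * P) = 0 := by
  have hV : ∀ z : ℂ, z * star z = 1 → (1 - P) + z • P ∈ unitaryGroup n ℂ := by
    intro z hz
    rw [mem_unitaryGroup_iff]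
    have h1 : star ((1 - P) + z • P) = (1 - P) + star z • P := by
      simp [hs]
    rw [h1]
    simp only [mul_add, add_mul, mul_sub, sub_mul, smul_mul_assoc, mul_smul_comm, hP, one_mul,
      mul_one]
    linear_combination (norm := module) hz • P
  -- Decomposition of `X` into the eigenspaces of `ad P`, for the eigenvalues `0`, `1`, `-1`.
  have key : ∀ X : Matrix n n ℂ, ∃ X₀ X₁ X₂ : Matrix n n ℂ, X = X₀ + X₁ + X₂ ∧
      P * X - X * P = X₁ - X₂ ∧ ∀ z : ℂ, z * star z = 1 →
        ((1 - P) + z • P) * X * star ((1 - P) + z • P) = X₀ + z • X₁ + star z • X₂ := by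
    intro X
    refine ⟨P * X * P + (1 - P) * X * (1 - P), P * X * (1 - P), (1 - P) * X * P, ?_, ?_, ?_⟩
    · noncomm_ring
    · noncomm_ring
    · intro z hz
      have h1 : star ((1 - P) + z • P) = (1 - P) + star z • P := by
        simp [hs]
      rw [h1]
      simp only [mul_add, add_mul, smul_mul_assoc, mul_smul_comm]
      linear_combination (norm := module) hz • (P * X * P)
  obtain ⟨B₀, B₁, B₂, hB, hB', hBz⟩ := key B
  obtain ⟨D₀, D₁, D₂, hD, hD', hDz⟩ := key D
  rw [hB', hD']
  have main : ∀ z : ℂ, z * star z = 1 →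
      g (B₀ + z • B₁ + star z • B₂) (D₀ + z • D₁ + star z • D₂) = g B D := by
    intro z hz
    rw [← hBz z hz, ← hDz z hz, hg _ (hV z hz)]
  -- Four points of the circle besides `1` suffice; `(3 + 4i) / 5` separates `z ^ 2` from `z ^ (-2)`,
  -- which fourth roots of unity cannot do.
  have e1 := main (-1) (by simp)
  have e2 := main Complex.I (by simp)
  have e3 := main (-Complex.I) (by simp)
  have e4 := main (3/5 + 4/5 * Complex.I) (by
    simp [Complex.ext_iff]; norm_num)
  rw [hB, hD] at *
  simp only [map_add, map_sub, map_smul, LinearMap.add_apply, LinearMap.sub_apply,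
    LinearMap.smul_apply, smul_eq_mul, star_neg, star_one, Complex.star_def, Complex.conj_I,
    map_mul, map_div₀, map_ofNat] at *
  have I2 := Complex.I_mul_I
  have hI := Complex.I_ne_zero
  generalize g B₀ D₀ = g00 at *
  generalize g B₀ D₁ = g01 at *
  generalize g B₀ D₂ = g02 at *
  generalize g B₁ D₀ = g10 at *
  generalize g B₁ D₁ = g11 at *
  generalize g B₁ D₂ = g12 at *
  generalize g B₂ D₀ = g20 at *
  generalize g B₂ D₁ = g21 at *
  generalize g B₂ D₂ = g22 at *
  generalize Complex.I = I at *
  have s1 : g10 + g01 + g20 + g02 = 0 := by linear_combination (-1/2) * e1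
  have s2 : g11 + g22 = 0 := by
    linear_combination (-1/4) * (e2 + e3) - s1 / 2 + (1/2) * (g11 + g22 - g12 - g21) * I2
  have s3 : g10 + g01 - g20 - g02 = 0 := by
    apply mul_left_cancel₀ hI
    linear_combination (1/2) * (e2 - e3)
  have s4 : g11 - g22 = 0 := by
    apply mul_left_cancel₀ hI
    linear_combination (25/24) * e4 - (5/6) * I * s3 + (5/12) * s1 + (4/3) * s2
      + (2/3) * (g12 + g21 - g11 - g22) * I2
  linear_combination s3 + 2 * s4


/-- The Hermitian projections onto `e_p`, `e_q`, `e_p + e_q` and `e_p - i e_q` span the matrix unit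
`E_pq`, so the derivation identity for projections extends to it by linearity. -/
lemma infinitesimal_single (g : Matrix n n ℂ →ₗ[ℂ] Matrix n n ℂ →ₗ[ℂ] ℂ)
    (hg : ∀ V ∈ unitaryGroup n ℂ, ∀ B D, g (V * B * star V) (V * D * star V) = g B D)
    (p q : n) (B D : Matrix n n ℂ) :
    g (single p q 1 * B - B * single p q 1) D + g B (single p q 1 * D - D * single p q 1) = 0 := by
  have hd : ∀ r : n, g (single r r 1 * B - B * single r r 1) D
      + g B (single r r 1 * D - D * single r r 1) = 0 := fun r =>
    infinitesimal_proj g hg _ (by simp) (by simp [star_eq_conjTranspose]) B D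
  rcases eq_or_ne p q with rfl | hpq
  · exact hd p
  have h1 := infinitesimal_proj g hg
    ((1 / 2 : ℂ) • (single p p 1 + single q q 1 + single p q 1 + single q p 1))
    (by
      simp only [mul_add, add_mul, smul_mul_assoc, mul_smul_comm, single_mul_single_same,
        single_mul_single_of_ne _ _ _ _ hpq, single_mul_single_of_ne _ _ _ _ hpq.symm, mul_one]
      module)
    (by
      simp [star_eq_conjTranspose]
      module) B D
  have h2 := infinitesimal_proj g hg
    ((1 / 2 : ℂ) • (single p p 1 + single q q 1 + Complex.I • single p q 1
      - Complex.I • single q p 1))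
    (by
      simp only [mul_add, add_mul, mul_sub, sub_mul, smul_mul_assoc, mul_smul_comm,
        single_mul_single_same,
        single_mul_single_of_ne _ _ _ _ hpq, single_mul_single_of_ne _ _ _ _ hpq.symm, mul_one]
      linear_combination (norm := module) 
        (-1 / 4 : ℂ) • Complex.I_mul_I • (single p p (1 : ℂ) + single q q 1))
    (by
      simp [star_eq_conjTranspose, -smul_single]
      module) B D
  have hp := hd p
  have hq := hd q
  simp only [mul_add, add_mul, mul_sub, sub_mul, smul_mul_assoc, mul_smul_comm, map_add, map_sub,
    map_smul, LinearMap.add_apply, LinearMap.sub_apply,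
    LinearMap.smul_apply, smul_eq_mul] at *
  linear_combination h1 - Complex.I * h2 - (1 - Complex.I) / 2 * (hp + hq)
    + (1 / 2) * (g (single p q 1 * B) D - g (B * single p q 1) D + g B (single p q 1 * D)
      - g B (D * single p q 1) - g (single q p 1 * B) D + g (B * single q p 1) D
      - g B (single q p 1 * D) + g B (D * single q p 1)) * Complex.I_mul_I

/-- A bilinear form on matrices that is invariant under simultaneous unitary conjugation is a
combination of `Tr B * Tr D` and `Tr (B * D)`; the coefficients are expressed through its two
contractions `g 1 1` and `∑ g E_ij E_ji`. -/
lemma invariant_bilin (g : Matrix n n ℂ →ₗ[ℂ] Matrix n n ℂ →ₗ[ℂ] ℂ)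
    (hg : ∀ V ∈ unitaryGroup n ℂ, ∀ B D, g (V * B * star V) (V * D * star V) = g B D)
    (B D : Matrix n n ℂ) :
    (Fintype.card n : ℂ) * ((Fintype.card n : ℂ) ^ 2 - 1) * g B D =
      (Fintype.card n * g 1 1 - ∑ i, ∑ j, g (single i j 1) (single j i 1))
        * (B.trace * D.trace) +
      (Fintype.card n * (∑ i, ∑ j, g (single i j 1) (single j i 1)) - g 1 1)
        * (B * D).trace := by
  set N : ℂ := (Fintype.card n : ℂ) with hN
  set G : n → n → n → n → ℂ := fun i j k l => g (single i j 1) (single k l 1) with hG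
  let δ : n → n → ℂ := fun i j => if i = j then 1 else 0
  have hδ : ∀ i j k l : n, single i j (1 : ℂ) * single k l 1 = δ j k • single i l 1 := by
    intro i j k l
    by_cases h : j = k
    · subst h; simp [δ]
    · simp [δ, h]
  -- The derivation identity for `E_pq`, in coordinates.
  have rel : ∀ p q i j k l, δ q i * G p j k l - δ j p * G i q k l + δ q k * G i j p l
      - δ l p * G i j k q = 0 := by
    intro p q i j k l
    have := infinitesimal_single g hg p q (single i j 1) (single k l 1)
    simp only [hδ, map_sub, map_smul, LinearMap.sub_apply, LinearMap.smul_apply,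
      smul_eq_mul] at this
    linear_combination this
  set T : n → n → ℂ := fun k l => ∑ i, G i i k l with hT
  set S : n → n → ℂ := fun k j => ∑ i, G i j k i with hS
  -- Contracting `q` with `i` in `rel` expresses `G` and its transposition in two indices through the
  -- partial contractions `T` and `S`; `T` and `S` are themselves multiples of `δ`.
  have c1 : ∀ p j k l, N * G p j k l - δ j p * T k l + G k j p l - δ l p * S k j = 0 := by
    intro p j k l
    have := Finset.sum_eq_zero fun i (_ : i ∈ Finset.univ) => rel p i i j k l
    simpa [Finset.sum_add_distrib, Finset.sum_sub_distrib, ← Finset.mul_sum, δ, hN, hT, hS]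
      using this
  have cT : ∀ p q k l, δ q k * T p l = δ l p * T k q := by
    intro p q k l
    have := Finset.sum_eq_zero fun i (_ : i ∈ Finset.univ) => rel p q i i k l
    rw [← sub_eq_zero]
    simpa [Finset.sum_add_distrib, Finset.sum_sub_distrib, Finset.mul_sum, δ, hT] using this
  have cS : ∀ p q k j, δ q k * S p j = δ j p * S k q := by
    intro p q k j
    have := Finset.sum_eq_zero fun i (_ : i ∈ Finset.univ) => rel p q i j k i
    have e1 : ∑ i, δ q i * G p j k i = G p j k q := by simp [δ]
    have e2 : ∑ i, δ i p * G i j k q = G p j k q := by simp [δ]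
    simp only [Finset.sum_add_distrib, Finset.sum_sub_distrib, ← Finset.mul_sum, e1, e2] at this
    simp only [hS]
    linear_combination this
  have dT : ∀ p l, N * T p l = δ l p * ∑ k, T k k := by
    intro p l
    have := Finset.sum_congr rfl fun k (_ : k ∈ Finset.univ) => cT p k k l
    simpa [← Finset.mul_sum, δ, hN] using this
  have dS : ∀ p j, N * S p j = δ j p * ∑ k, S k k := by
    intro p j
    have := Finset.sum_congr rfl fun k (_ : k ∈ Finset.univ) => cS p k k j
    simpa [← Finset.mul_sum, δ, hN] using this
  have hτ : ∑ k, T k k = g 1 1 := by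
    have hone : (1 : Matrix n n ℂ) = ∑ i, single i i 1 := by
      rw [← diagonal_one, ← sum_single_eq_diagonal]
    rw [hone]
    simp [hT, hG]
  have hσ : ∑ k, S k k = ∑ i, ∑ j, g (single i j 1) (single j i 1) := by
    simp only [hS, hG]
    exact Finset.sum_comm
  rw [hτ] at dT
  rw [hσ] at dS
  set σ := ∑ i, ∑ j, g (single i j 1) (single j i 1)
  have fin : ∀ i j k l, N * (N ^ 2 - 1) * G i j k l
      = (N * g 1 1 - σ) * (δ i j * δ k l) + (N * σ - g 1 1) * (δ j k * δ i l) := by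
    have hsymm : ∀ i j, δ i j = δ j i := fun i j => by simp [δ, eq_comm]
    intro i j k l
    rw [hsymm i j, hsymm k l, hsymm i l]
    linear_combination N ^ 2 * c1 i j k l - N * c1 k j i l
      + N * δ j i * dT k l + N * δ l i * dS k j - δ j k * dT i l - δ l k * dS i j
  induction B using Matrix.induction_on' with
  | h_zero => simp
  | h_add B B' h h' =>
    simp only [map_add, LinearMap.add_apply, trace_add, add_mul]
    linear_combination h + h'
  | h_std_basis i j x =>
    induction D using Matrix.induction_on' with
    | h_zero => simp
    | h_add D D' h h' =>
      simp only [map_add, trace_add, mul_add]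
      linear_combination h + h'
    | h_std_basis k l y =>
      have hs : ∀ (i j : n) (x : ℂ), single i j x = x • single i j 1 := by simp
      have ht : ∀ i j : n, (single i j (1 : ℂ)).trace = δ i j := by
        intro i j
        by_cases h : i = j
        · subst h; simp [δ]
        · simp [δ, h]
      rw [hs i j x, hs k l y]
      simp only [map_smul, LinearMap.smul_apply, smul_eq_mul, trace_smul, smul_mul_assoc,
        mul_smul_comm, hδ, ht]
      linear_combination x * y * fin i j k l

lemma isCompact_entries_le_one {n : Type*} : IsCompact {M : Matrix n n ℂ | ∀ i j, ‖M i j‖ ≤ 1} := by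
  have h : IsCompact (Set.pi Set.univ fun _ : n => Set.pi Set.univ fun _ : n =>
      Metric.closedBall (0 : ℂ) 1) :=
    isCompact_univ_pi fun _ => isCompact_univ_pi fun _ => isCompact_closedBall _ _
  have e : {M : n → n → ℂ | ∀ i j, ‖M i j‖ ≤ 1} = (Set.pi Set.univ fun _ : n =>
      Set.pi Set.univ fun _ : n => Metric.closedBall (0 : ℂ) 1) := by
    ext M
    simp [Set.mem_pi]
  rw [← e] at h
  exact h

/-- Entries of unitary matrices lie in the closed unit disc, so a continuous function of the entries
is bounded on the unitary group. -/
lemma integrable_of_continuous (μ : Measure (unitaryGroup n ℂ)) [IsProbabilityMeasure μ]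
    (f : Matrix n n ℂ → ℂ) (hf : Continuous f) :
    Integrable (fun W : unitaryGroup n ℂ => f W) μ := by
  obtain ⟨K, hK⟩ := isCompact_entries_le_one.exists_bound_of_continuousOn hf.continuousOn
  have hc : Continuous (fun W : unitaryGroup n ℂ => f W) := hf.comp continuous_subtype_val
  exact Integrable.of_bound (C := K) hc.aestronglyMeasurable
    (.of_forall fun W => hK W.1 fun i j => entry_norm_bound_of_unitary W.2 i j)

lemma integrable_trace (μ : Measure (unitaryGroup n ℂ)) [IsProbabilityMeasure μ]
    (A C B D : Matrix n n ℂ) :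
    Integrable (fun W : unitaryGroup n ℂ => ((W : Matrix n n ℂ) * A * star (W : Matrix n n ℂ) *
          B * (W : Matrix n n ℂ) * C * star (W : Matrix n n ℂ) * D).trace) μ := by
  refine integrable_of_continuous μ (fun W => (W * A * star W * B * W * C * star W * D).trace) ?_
  have h1 : Continuous fun W : Matrix n n ℂ => W := continuous_id
  have h2 : Continuous fun W : Matrix n n ℂ => star W := continuous_star
  have hc : ∀ X : Matrix n n ℂ, Continuous fun _ : Matrix n n ℂ => X := fun X => continuous_const
  exact (((((((h1.mul (hc A)).mul h2).mul (hc B)).mul h1).mul (hc C)).mul h2).mul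
    (hc D)).matrix_trace

/-- Replacing `W` by `V * W` in the integrand amounts to conjugating `B` and `D` by `V`. -/
lemma trace_conj_left {V : Matrix n n ℂ} (hV : star V * V = 1) (W A B C D : Matrix n n ℂ) :
    (V * W * A * star (V * W) * (V * B * star V) * (V * W) * C * star (V * W)
      * (V * D * star V)).trace = (W * A * star W * B * W * C * star W * D).trace := by
  have hc : ∀ X, star V * (V * X) = X := fun X => by rw [← mul_assoc, hV, one_mul]
  simp only [star_mul, mul_assoc, hc]
  rw [trace_mul_comm]
  simp only [mul_assoc, hV, mul_one]

lemma trace_conj {W : Matrix n n ℂ} (hW : star W * W = 1) (X : Matrix n n ℂ) :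
    (W * X * star W).trace = X.trace := by
  rw [trace_mul_comm, ← mul_assoc, hW, one_mul]

lemma sum_trace_single (X Y : Matrix n n ℂ) :
    ∑ i, ∑ j, (X * single i j 1 * Y * single j i 1).trace = X.trace * Y.trace := by
  simp only [mul_assoc X, single_mul_mul_single, trace_mul_single]
  simp [trace, Finset.sum_mul_sum]

end

/-- Second-moment Haar integral:
`∫ Tr[W A W† B W C W† D] dμ(W)
  = (Tr[A]Tr[C]Tr[BD] + Tr[AC]Tr[B]Tr[D])/(d²−1)
    − (Tr[A]Tr[B]Tr[C]Tr[D] + Tr[AC]Tr[BD])/(d(d²−1))`. -/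
theorem haar_integral_trace_second_moment
    (d : ℕ) (hd : 1 < d) (μ : Measure (Matrix.unitaryGroup (Fin d) ℂ))
    [μ.IsHaarMeasure] [IsProbabilityMeasure μ]
    (A B C D : Matrix (Fin d) (Fin d) ℂ) :
    ∫ W : Matrix.unitaryGroup (Fin d) ℂ,
        ((W : Matrix (Fin d) (Fin d) ℂ) * A * star (W : Matrix (Fin d) (Fin d) ℂ) * B *
          (W : Matrix (Fin d) (Fin d) ℂ) * C * star (W : Matrix (Fin d) (Fin d) ℂ) * D).trace ∂μ
      = (1 / ((d : ℂ) ^ 2 - 1)) *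
          (A.trace * C.trace * (B * D).trace + (A * C).trace * B.trace * D.trace)
        - (1 / ((d : ℂ) * ((d : ℂ) ^ 2 - 1))) *
          (A.trace * B.trace * C.trace * D.trace + (A * C).trace * (B * D).trace) := by
  have hint := integrable_trace μ A C
  obtain ⟨g, hgdef⟩ : ∃ g : Matrix (Fin d) (Fin d) ℂ →ₗ[ℂ] Matrix (Fin d) (Fin d) ℂ →ₗ[ℂ] ℂ,
      ∀ B D, g B D = ∫ W : unitaryGroup (Fin d) ℂ,
        ((W : Matrix (Fin d) (Fin d) ℂ) * A * star (W : Matrix (Fin d) (Fin d) ℂ) * B *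
          (W : Matrix (Fin d) (Fin d) ℂ) * C * star (W : Matrix (Fin d) (Fin d) ℂ) * D).trace ∂μ :=
    ⟨LinearMap.mk₂ ℂ (fun B D => ∫ W : unitaryGroup (Fin d) ℂ,
        ((W : Matrix (Fin d) (Fin d) ℂ) * A * star (W : Matrix (Fin d) (Fin d) ℂ) * B *
          (W : Matrix (Fin d) (Fin d) ℂ) * C * star (W : Matrix (Fin d) (Fin d) ℂ) * D).trace ∂μ)
      (fun B B' D => by
        rw [← integral_add (hint B D) (hint B' D)]
        simp only [mul_add, add_mul, trace_add])
      (fun c B D => by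
        rw [← integral_smul]
        simp only [mul_smul_comm, smul_mul_assoc, trace_smul])
      (fun B D D' => by
        rw [← integral_add (hint B D) (hint B D')]
        simp only [mul_add, trace_add])
      (fun c B D => by
        rw [← integral_smul]
        simp only [mul_smul_comm, trace_smul]), fun _ _ => rfl⟩
  have hW : ∀ W : unitaryGroup (Fin d) ℂ,
      star (W : Matrix (Fin d) (Fin d) ℂ) * (W : Matrix (Fin d) (Fin d) ℂ) = 1 :=
    fun W => mem_unitaryGroup_iff'.1 W.2
  have hg : ∀ V ∈ unitaryGroup (Fin d) ℂ, ∀ B D,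
      g (V * B * star V) (V * D * star V) = g B D := by
    intro V hV B D
    rw [hgdef, hgdef, ← integral_mul_left_eq_self _ (⟨V, hV⟩ : unitaryGroup (Fin d) ℂ)]
    exact integral_congr_ae (.of_forall fun W =>
      trace_conj_left (mem_unitaryGroup_iff'.1 hV) (W : Matrix (Fin d) (Fin d) ℂ) A B C D)
  have h11 : g 1 1 = (A * C).trace := by
    have : ∀ W : unitaryGroup (Fin d) ℂ, ((W : Matrix (Fin d) (Fin d) ℂ) * A *
        star (W : Matrix (Fin d) (Fin d) ℂ) * 1 * (W : Matrix (Fin d) (Fin d) ℂ) * C *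
        star (W : Matrix (Fin d) (Fin d) ℂ) * 1).trace = (A * C).trace := by
      intro W
      rw [← trace_conj (hW W) (A * C), mul_one, mul_one, mul_assoc (_ * A), hW, mul_one,
        mul_assoc _ A C]
    simp_rw [hgdef, this]
    simp
  have hs : ∑ i, ∑ j, g (single i j 1) (single j i 1) = A.trace * C.trace := by
    simp only [hgdef]
    rw [Finset.sum_congr rfl fun i _ => (integral_finsetSum _ fun j _ => hint _ _).symm,
      ← integral_finsetSum _ fun i _ => integrable_finsetSum _ fun j _ => hint _ _]
    have : ∀ W : unitaryGroup (Fin d) ℂ, ∑ i, ∑ j, ((W : Matrix (Fin d) (Fin d) ℂ) * A *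
        star (W : Matrix (Fin d) (Fin d) ℂ) * single i j 1 * (W : Matrix (Fin d) (Fin d) ℂ) * C *
        star (W : Matrix (Fin d) (Fin d) ℂ) * single j i 1).trace = A.trace * C.trace := by
      intro W
      rw [← trace_conj (hW W) A, ← trace_conj (hW W) C, ← sum_trace_single]
      simp only [mul_assoc]
    simp_rw [this]
    simp
  have key := invariant_bilin g hg B D
  rw [h11, hs, Fintype.card_fin, hgdef] at key
  have hd0 : (d : ℂ) ≠ 0 := by
    exact_mod_cast (by omega : d ≠ 0)
  have hd1 : (d : ℂ) ^ 2 - 1 ≠ 0 := by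
    rw [sub_ne_zero]
    exact_mod_cast (by nlinarith : d ^ 2 ≠ 1)
  rw [← mul_right_inj' (mul_ne_zero hd0 hd1), key]
  field_simp
  ring
end

section
/- Let μ be the normalized Haar probability measure on the unitary group U(d). For arbitrary d×d complex matrices A, B, C, D, ∫ Tr[W A W† B]·Tr[W C W† D] dμ(W) = (1/(d²−1))·(Tr[A]Tr[B]Tr[C]Tr[D] + Tr[AC]Tr[BD]) − (1/(d(d²−1)))·(Tr[A]Tr[C]Tr[BD] + Tr[AC]Tr[B]Tr[D]). -/
/-!
Write `X = W A W†` and `Y = W C W†`. The integral is a linear combination, with coefficients from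
`B` and `D`, of the moments `M i j k l = ∫ X i j * Y k l ∂μ`, so everything reduces to the shape of
`M`. Left invariance of `μ` allows `X, Y` to be replaced by `U X U†, U Y U†` for any fixed unitary
`U` (`moment_conj`), and three kinds of `U` determine `M` up to two scalars:

* a diagonal `U` with a single entry `I` forces `M i j k l = 0` unless `i = j, k = l` or
  `i = l, j = k` (`moment_eq_zero`);
* permutation matrices show that `M i i k k` and `M i k k i` do not depend on `i ≠ k`
  (`moment_perm`); call these values `b` and `c`;
* the square root `((1 + I) + (1 - I) P) / 2` of a transposition matrix `P` gives
  `M p p p p = b + c` (`moment_diag`).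

Hence `M i j k l = b δ_ij δ_kl + c δ_il δ_jk` (`moment_form`). Contracting the indices in the two
possible ways gives `b d² + c d = Tr A Tr C` and `b d + c d² = Tr (A C)`, which determines `b` and
`c` because `d² (d² - 1) ≠ 0`.
-/

open MeasureTheory Matrix

namespace HaarSecondMoment

variable {d : ℕ}

/-! ### Conjugates and their moments -/

/-- The conjugate `W A W†`. -/
def conjBy (A : Matrix (Fin d) (Fin d) ℂ) (W : unitaryGroup (Fin d) ℂ) :
    Matrix (Fin d) (Fin d) ℂ :=
  (W : Matrix (Fin d) (Fin d) ℂ) * A * star (W : Matrix (Fin d) (Fin d) ℂ)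

lemma conjBy_mul (A : Matrix (Fin d) (Fin d) ℂ) (U W : unitaryGroup (Fin d) ℂ) :
    conjBy A (U * W) = (U : Matrix (Fin d) (Fin d) ℂ) * conjBy A W *
      star (U : Matrix (Fin d) (Fin d) ℂ) := by
  simp [conjBy, star_mul, mul_assoc]

lemma continuous_conjBy (A : Matrix (Fin d) (Fin d) ℂ) : Continuous (conjBy A) := by
  unfold conjBy
  exact (continuous_subtype_val.mul continuous_const).mul continuous_subtype_val.star

lemma continuous_conjBy_apply (A : Matrix (Fin d) (Fin d) ℂ) (i j : Fin d) :
    Continuous fun W => conjBy A W i j :=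
  (continuous_conjBy A).matrix_elem i j

/-- Entries of a unitary matrix have norm at most `1`, so entries of `W A W†` are bounded
uniformly in `W`. -/
lemma norm_conjBy_le (A : Matrix (Fin d) (Fin d) ℂ) (W : unitaryGroup (Fin d) ℂ) (i j : Fin d) :
    ‖conjBy A W i j‖ ≤ ∑ k, ∑ l, ‖A l k‖ := by
  simp only [conjBy, Matrix.mul_apply, Matrix.star_apply, Finset.sum_mul]
  refine (norm_sum_le _ _).trans (Finset.sum_le_sum fun k _ => ?_)
  refine (norm_sum_le _ _).trans (Finset.sum_le_sum fun l _ => ?_)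
  rw [norm_mul, norm_mul, norm_star]
  have h1 := entry_norm_bound_of_unitary W.2 i l
  have h2 := entry_norm_bound_of_unitary W.2 j k
  calc _ ≤ 1 * ‖A l k‖ * 1 := by gcongr
    _ = _ := by ring

variable (μ : Measure (unitaryGroup (Fin d) ℂ))

lemma integrable_entries [IsProbabilityMeasure μ] (A C : Matrix (Fin d) (Fin d) ℂ)
    (i j k l : Fin d) : Integrable (fun W => conjBy A W i j * conjBy C W k l) μ := by
  refine Integrable.of_bound
    ((continuous_conjBy_apply A i j).mul (continuous_conjBy_apply C k l)).aestronglyMeasurable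
    ((∑ k, ∑ l, ‖A l k‖) * (∑ k, ∑ l, ‖C l k‖)) (.of_forall fun W => ?_)
  rw [norm_mul]
  have h1 := norm_conjBy_le A W i j
  have h2 := norm_conjBy_le C W k l
  gcongr

/-- The moment `∫ (W A W†) i j * (W C W†) k l ∂μ`. -/
noncomputable def moment (A C : Matrix (Fin d) (Fin d) ℂ) (i j k l : Fin d) : ℂ :=
  ∫ W, conjBy A W i j * conjBy C W k l ∂μ

/-! ### Symmetries of the moments -/

/-- Left invariance of `μ`, applied to `W ↦ U * W`. -/
lemma moment_conj [μ.IsHaarMeasure] (A C : Matrix (Fin d) (Fin d) ℂ) (i j k l : Fin d)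
    (U : Matrix (Fin d) (Fin d) ℂ) (hU : U * star U = 1) :
    moment μ A C i j k l =
      ∫ W, (U * conjBy A W * star U) i j * (U * conjBy C W * star U) k l ∂μ := by
  have := integral_mul_left_eq_self (μ := μ) (fun W => conjBy A W i j * conjBy C W k l)
    ⟨U, mem_unitaryGroup_iff.2 hU⟩
  simp only [conjBy_mul] at this
  exact this.symm

lemma moment_perm [μ.IsHaarMeasure] (A C : Matrix (Fin d) (Fin d) ℂ) (i j k l : Fin d)
    (σ : Equiv.Perm (Fin d)) :
    moment μ A C i j k l = moment μ A C (σ i) (σ j) (σ k) (σ l) := by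
  have hs : star ((1 : Matrix (Fin d) (Fin d) ℂ).submatrix σ id) =
      (1 : Matrix (Fin d) (Fin d) ℂ).submatrix id σ := by
    simp [star_eq_conjTranspose, conjTranspose_submatrix]
  rw [moment_conj μ A C i j k l ((1 : Matrix (Fin d) (Fin d) ℂ).submatrix σ id)]
  · rw [hs]
    have key : ∀ (X : Matrix (Fin d) (Fin d) ℂ) (p q : Fin d),
        ((1 : Matrix (Fin d) (Fin d) ℂ).submatrix σ id * X *
          (1 : Matrix (Fin d) (Fin d) ℂ).submatrix id σ) p q = X (σ p) (σ q) := by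
      intro X p q
      simp [Matrix.mul_apply, Matrix.one_apply]
    simp only [key]
    rfl
  · rw [hs]
    ext p q
    simp [Matrix.mul_apply, Matrix.one_apply]

/-- The diagonal matrix with entry `I` at `m` and `1` elsewhere multiplies `X i j * Y k l` by the
phase `u i * conj (u j) * u k * conj (u l)`. -/
lemma moment_phase [μ.IsHaarMeasure] (A C : Matrix (Fin d) (Fin d) ℂ) (i j k l m : Fin d) :
    let u : Fin d → ℂ := fun p => if p = m then Complex.I else 1
    moment μ A C i j k l = (u i * star (u j) * (u k * star (u l))) * moment μ A C i j k l := by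
  intro u
  have hu : ∀ p, u p * star (u p) = 1 := by
    intro p
    by_cases h : p = m <;> simp [u, h]
  conv_lhs => rw [moment_conj μ A C i j k l (diagonal u) (by
    rw [star_eq_conjTranspose, diagonal_conjTranspose, diagonal_mul_diagonal, ← diagonal_one]
    congr 1
    funext p
    exact hu p)]
  rw [moment, ← integral_const_mul]
  congr 1
  funext W
  rw [star_eq_conjTranspose, diagonal_conjTranspose, mul_diagonal, mul_diagonal, diagonal_mul,
    diagonal_mul]
  simp only [Pi.star_apply]
  ring

lemma moment_eq_zero [μ.IsHaarMeasure] (A C : Matrix (Fin d) (Fin d) ℂ) (i j k l : Fin d)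
    (h1 : ¬ (i = j ∧ k = l)) (h2 : ¬ (i = l ∧ j = k)) : moment μ A C i j k l = 0 := by
  -- It suffices that the phase at `m = i` or at `m = k` is not `1`.
  have hi := moment_phase μ A C i j k l i
  have hk := moment_phase μ A C i j k l k
  have c1 : (1 : ℂ) - Complex.I ≠ 0 := fun h => by simpa using congrArg Complex.re h
  have c2 : (1 : ℂ) + 1 ≠ 0 := by norm_num
  have aux1 : ∀ x : ℂ, x = Complex.I * x → x = 0 := fun x hx =>
    (mul_eq_zero.1 (show (1 - Complex.I) * x = 0 by linear_combination hx)).resolve_left c1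
  have aux2 : ∀ x : ℂ, x = -x → x = 0 := fun x hx =>
    (mul_eq_zero.1 (show ((1 : ℂ) + 1) * x = 0 by linear_combination hx)).resolve_left c2
  by_cases hij : i = j
  · subst hij
    have hkl : l ≠ k := fun h => h1 ⟨rfl, h.symm⟩
    by_cases hik : i = k
    · subst hik
      simp [hkl] at hk
      tauto
    · simp [hkl, hik] at hk
      tauto
  · by_cases hil : i = l
    · subst hil
      have hjk : j ≠ k := fun h => h2 ⟨rfl, h⟩
      by_cases hik : i = k
      · subst hik
        simp [hjk] at hk
        tauto
      · simp [hjk, hik] at hk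
        tauto
    · by_cases hik : k = i
      · simp [Ne.symm hij, Ne.symm hil, hik] at hi
        rw [hik]
        tauto
      · simp [Ne.symm hij, Ne.symm hil, hik] at hi
        tauto

lemma integral_comb {f₁ f₂ f₃ f₄ : unitaryGroup (Fin d) ℂ → ℂ} (h₁ : Integrable f₁ μ)
    (h₂ : Integrable f₂ μ) (h₃ : Integrable f₃ μ) (h₄ : Integrable f₄ μ) (s t : ℂ) :
    ∫ W, (f₁ W + f₂ W + s * f₃ W + t * f₄ W) ∂μ =
      ∫ W, f₁ W ∂μ + ∫ W, f₂ W ∂μ + s * ∫ W, f₃ W ∂μ + t * ∫ W, f₄ W ∂μ := by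
  have h₁₂ : Integrable (fun W => f₁ W + f₂ W) μ := h₁.add h₂
  have h₁₂₃ : Integrable (fun W => f₁ W + f₂ W + s * f₃ W) μ := h₁₂.add (h₃.const_mul s)
  rw [integral_add h₁₂₃ (h₄.const_mul t), integral_add h₁₂ (h₃.const_mul s), integral_add h₁ h₂,
    integral_const_mul, integral_const_mul]

/-- Invariance under `U = ((1 + I) + (1 - I) P) / 2`, where `P` is the transposition matrix of
`p ≠ q`: one has `(U X U†) p p = (X p p + X q q + I * X p q - I * X q p) / 2`, and all but the
listed moments in the expansion vanish. -/
lemma moment_diag [μ.IsHaarMeasure] [IsProbabilityMeasure μ] (A C : Matrix (Fin d) (Fin d) ℂ)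
    (p q : Fin d) (hpq : p ≠ q) :
    moment μ A C p p p p = (1 / 4) * (moment μ A C p p p p + moment μ A C q q q q +
      moment μ A C p p q q + moment μ A C q q p p + moment μ A C p q q p +
      moment μ A C q p p q) := by
  set P : Matrix (Fin d) (Fin d) ℂ :=
    (1 : Matrix (Fin d) (Fin d) ℂ).submatrix (Equiv.swap p q) id with hP
  have hPl : ∀ (X : Matrix (Fin d) (Fin d) ℂ) (a b : Fin d),
      (P * X) a b = X (Equiv.swap p q a) b := by
    intro X a b
    simp [P, Matrix.mul_apply, Matrix.one_apply]
  have hPr : ∀ (X : Matrix (Fin d) (Fin d) ℂ) (a b : Fin d),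
      (X * P) a b = X a (Equiv.swap p q b) := by
    intro X a b
    simp [P, Matrix.mul_apply, Matrix.one_apply, Equiv.swap_apply_eq_iff]
  have hs : star P = P := by
    ext a b
    have hab : Equiv.swap p q b = a ↔ Equiv.swap p q a = b := by
      rw [Equiv.swap_apply_eq_iff, eq_comm]
    simp [P, Matrix.one_apply, Matrix.star_apply, hab]
  have hPP : P * P = 1 := by
    ext a b
    rw [hPl, hP, submatrix_apply, Equiv.swap_apply_self]
    rfl
  set U : Matrix (Fin d) (Fin d) ℂ :=
    ((1 + Complex.I) / 2) • (1 : Matrix (Fin d) (Fin d) ℂ) + ((1 - Complex.I) / 2) • P with hU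
  have hsU : star U = ((1 - Complex.I) / 2) • (1 : Matrix (Fin d) (Fin d) ℂ) +
      ((1 + Complex.I) / 2) • P := by
    rw [hU, star_add, star_smul, star_smul, star_one, hs]
    simp [sub_eq_add_neg]
  have hconj : ∀ X : Matrix (Fin d) (Fin d) ℂ, U * X * star U =
      (1 / 2 : ℂ) • X + (Complex.I / 2) • (X * P) - (Complex.I / 2) • (P * X) +
        (1 / 2 : ℂ) • (P * X * P) := by
    intro X
    rw [hsU, hU]
    simp only [add_mul, mul_add, smul_mul_assoc, mul_smul_comm, one_mul, mul_one, smul_smul,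
      smul_add]
    have e1 : (1 - Complex.I) / 2 * ((1 + Complex.I) / 2) = 1 / 2 := by
      linear_combination (-1 / 4 : ℂ) * Complex.I_sq
    have e2 : (1 + Complex.I) / 2 * ((1 + Complex.I) / 2) = Complex.I / 2 := by
      linear_combination (1 / 4 : ℂ) * Complex.I_sq
    have e3 : (1 - Complex.I) / 2 * ((1 - Complex.I) / 2) = -(Complex.I / 2) := by
      linear_combination (1 / 4 : ℂ) * Complex.I_sq
    have e4 : (1 + Complex.I) / 2 * ((1 - Complex.I) / 2) = 1 / 2 := by rw [mul_comm, e1]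
    simp only [e1, e2, e3, e4, neg_smul]
    abel
  have hUU : U * star U = 1 := by
    have := hconj 1
    rw [mul_one, mul_one, one_mul, hPP] at this
    rw [this, add_sub_cancel_right, ← add_smul]
    norm_num
  have hentry : ∀ X : Matrix (Fin d) (Fin d) ℂ, (U * X * star U) p p =
      (1 / 2) * (X p p + X q q + Complex.I * X p q - Complex.I * X q p) := by
    intro X
    rw [hconj]
    simp only [Matrix.add_apply, Matrix.sub_apply, Matrix.smul_apply, smul_eq_mul, hPl, hPr,
      Equiv.swap_apply_left]
    ring
  have hI := fun i j k l => integrable_entries μ A C i j k l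
  -- The linear combination of the sixteen products, moved inside the integral.
  have hexp : moment μ A C p p p p = (1 / 4) * (
      (moment μ A C p p p p + moment μ A C p p q q + Complex.I * moment μ A C p p p q
        + (-Complex.I) * moment μ A C p p q p) +
      (moment μ A C q q p p + moment μ A C q q q q + Complex.I * moment μ A C q q p q
        + (-Complex.I) * moment μ A C q q q p) +
      Complex.I * (moment μ A C p q p p + moment μ A C p q q q + Complex.I * moment μ A C p q p q
        + (-Complex.I) * moment μ A C p q q p) +
      (-Complex.I) * (moment μ A C q p p p + moment μ A C q p q q
        + Complex.I * moment μ A C q p p q + (-Complex.I) * moment μ A C q p q p)) := by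
    conv_lhs => rw [moment_conj μ A C p p p p U hUU]
    have hrow : ∀ i j, moment μ A C i j p p + moment μ A C i j q q +
        Complex.I * moment μ A C i j p q + (-Complex.I) * moment μ A C i j q p =
        ∫ W, (conjBy A W i j * conjBy C W p p + conjBy A W i j * conjBy C W q q +
          Complex.I * (conjBy A W i j * conjBy C W p q) +
          (-Complex.I) * (conjBy A W i j * conjBy C W q p)) ∂μ := by
      intro i j
      exact (integral_comb μ (hI _ _ _ _) (hI _ _ _ _) (hI _ _ _ _) (hI _ _ _ _) _ _).symm
    have hrowI : ∀ i j, Integrable (fun W => conjBy A W i j * conjBy C W p p +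
          conjBy A W i j * conjBy C W q q +
          Complex.I * (conjBy A W i j * conjBy C W p q) +
          (-Complex.I) * (conjBy A W i j * conjBy C W q p)) μ := fun i j =>
      (((hI _ _ _ _).add (hI _ _ _ _)).add ((hI _ _ _ _).const_mul _)).add
          ((hI _ _ _ _).const_mul _)
    simp only [hrow]
    rw [← integral_comb μ (hrowI _ _) (hrowI _ _) (hrowI _ _) (hrowI _ _), ← integral_const_mul]
    congr 1
    funext W
    rw [hentry, hentry]
    ring
  have hqp := hpq.symm
  rw [moment_eq_zero μ A C p p p q (by tauto) (by tauto),
    moment_eq_zero μ A C p p q p (by tauto) (by tauto),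
    moment_eq_zero μ A C q q p q (by tauto) (by tauto),
    moment_eq_zero μ A C q q q p (by tauto) (by tauto),
    moment_eq_zero μ A C p q p p (by tauto) (by tauto),
    moment_eq_zero μ A C p q q q (by tauto) (by tauto),
    moment_eq_zero μ A C p q p q (by tauto) (by tauto),
    moment_eq_zero μ A C q p p p (by tauto) (by tauto),
    moment_eq_zero μ A C q p q q (by tauto) (by tauto),
    moment_eq_zero μ A C q p q p (by tauto) (by tauto)] at hexp
  linear_combination hexp - (1 / 4) * (moment μ A C p q q p + moment μ A C q p p q) * Complex.I_sq

/-! ### The moments up to two scalars -/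

lemma moment_form [μ.IsHaarMeasure] [IsProbabilityMeasure μ] (hd : 1 < d)
    (A C : Matrix (Fin d) (Fin d) ℂ) : ∃ b c : ℂ, ∀ i j k l, moment μ A C i j k l =
      b * ((if i = j then 1 else 0) * (if k = l then 1 else 0)) +
      c * ((if i = l then 1 else 0) * (if j = k then 1 else 0)) := by
  set z : Fin d := ⟨0, by omega⟩
  set o : Fin d := ⟨1, hd⟩
  have hzo : z ≠ o := by simp [z, o]
  have htrans : ∀ i k : Fin d, i ≠ k → ∃ σ : Equiv.Perm (Fin d), σ i = z ∧ σ k = o := by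
    intro i k hik
    exact MulAction.is_two_pretransitive_iff.1
      (Equiv.Perm.isMultiplyPretransitive (Fin d) 2) hik hzo
  have hb : ∀ i k, i ≠ k → moment μ A C i i k k = moment μ A C z z o o := by
    intro i k hik
    obtain ⟨σ, h1, h2⟩ := htrans i k hik
    rw [moment_perm μ A C i i k k σ, h1, h2]
  have hc : ∀ i k, i ≠ k → moment μ A C i k k i = moment μ A C z o o z := by
    intro i k hik
    obtain ⟨σ, h1, h2⟩ := htrans i k hik
    rw [moment_perm μ A C i k k i σ, h1, h2]
  have ha : ∀ p, moment μ A C p p p p = moment μ A C z z o o + moment μ A C z o o z := by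
    intro p
    have : Nontrivial (Fin d) := ⟨z, o, hzo⟩
    obtain ⟨q, hq⟩ := exists_ne p
    have h := moment_diag μ A C p q hq.symm
    have hs := moment_perm μ A C p p p p (Equiv.swap p q)
    rw [Equiv.swap_apply_left] at hs
    rw [← hs, hb p q hq.symm, hb q p hq, hc p q hq.symm, hc q p hq] at h
    linear_combination 2 * h
  refine ⟨moment μ A C z z o o, moment μ A C z o o z, fun i j k l => ?_⟩
  by_cases h1 : i = j ∧ k = l
  · obtain ⟨rfl, rfl⟩ := h1
    by_cases hik : i = k
    · subst hik
      simp [ha]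
    · simp [hik, hb i k hik]
  · by_cases h2 : i = l ∧ j = k
    · obtain ⟨rfl, rfl⟩ := h2
      have hij : i ≠ j := fun h => h1 ⟨h, h.symm⟩
      simp [hij, hc i j hij]
    · rw [moment_eq_zero μ A C i j k l h1 h2]
      have e1 : ((if i = j then 1 else 0) * (if k = l then 1 else 0) : ℂ) = 0 := by
        rw [mul_ite_zero, mul_one]
        split_ifs <;> tauto
      have e2 : ((if i = l then 1 else 0) * (if j = k then 1 else 0) : ℂ) = 0 := by
        rw [mul_ite_zero, mul_one]
        split_ifs <;> tauto
      rw [e1, e2]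
      ring

/-! ### Contractions -/

/-- Contraction of the moment form with two matrices `B` and `D`; the case `B = D = 1` gives
the first of the two scalar equations for `b` and `c`. -/
lemma integral_trace_eq [μ.IsHaarMeasure] [IsProbabilityMeasure μ]
    (A C : Matrix (Fin d) (Fin d) ℂ) (b c : ℂ)
    (h : ∀ i j k l, moment μ A C i j k l =
      b * ((if i = j then 1 else 0) * (if k = l then 1 else 0)) +
      c * ((if i = l then 1 else 0) * (if j = k then 1 else 0)))
    (B D : Matrix (Fin d) (Fin d) ℂ) :
    ∫ W, (conjBy A W * B).trace * (conjBy C W * D).trace ∂μ =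
      b * (B.trace * D.trace) + c * (B * D).trace := by
  have hexp : ∀ W, (conjBy A W * B).trace * (conjBy C W * D).trace =
      ∑ i, ∑ j, ∑ k, ∑ l, (B j i * D l k) * (conjBy A W i j * conjBy C W k l) := by
    intro W
    rw [mul_comm]
    simp only [Matrix.trace, Matrix.diag, Matrix.mul_apply, Finset.sum_mul, Finset.mul_sum]
    refine Finset.sum_congr rfl fun i _ => Finset.sum_congr rfl fun j _ =>
      Finset.sum_congr rfl fun k _ => Finset.sum_congr rfl fun l _ => ?_
    ring
  have hI : ∀ i j k l, Integrable
      (fun W => (B j i * D l k) * (conjBy A W i j * conjBy C W k l)) μ :=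
    fun i j k l => (integrable_entries μ A C i j k l).const_mul _
  simp only [hexp]
  rw [integral_finsetSum _ fun i _ => integrable_finsetSum _ fun j _ =>
    integrable_finsetSum _ fun k _ => integrable_finsetSum _ fun l _ => hI i j k l]
  have hstep : ∀ i, ∫ W, ∑ j, ∑ k, ∑ l, (B j i * D l k) * (conjBy A W i j * conjBy C W k l) ∂μ =
      ∑ j, ∑ k, ∑ l, (B j i * D l k) * moment μ A C i j k l := by
    intro i
    rw [integral_finsetSum _ fun j _ =>
      integrable_finsetSum _ fun k _ => integrable_finsetSum _ fun l _ => hI i j k l]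
    refine Finset.sum_congr rfl fun j _ => ?_
    rw [integral_finsetSum _ fun k _ => integrable_finsetSum _ fun l _ => hI i j k l]
    refine Finset.sum_congr rfl fun k _ => ?_
    rw [integral_finsetSum _ fun l _ => hI i j k l]
    refine Finset.sum_congr rfl fun l _ => ?_
    rw [integral_const_mul]
    rfl
  simp only [hstep, h, mul_add, Finset.sum_add_distrib]
  congr 1
  · simp [Matrix.trace, Finset.mul_sum, mul_comm]
    exact Finset.sum_comm
  · simp [Matrix.trace, Matrix.mul_apply, Finset.mul_sum, mul_comm]
    exact Finset.sum_comm

lemma trace_conjBy (A : Matrix (Fin d) (Fin d) ℂ) (W : unitaryGroup (Fin d) ℂ) :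
    (conjBy A W).trace = A.trace := by
  rw [conjBy, Matrix.trace_mul_comm, ← mul_assoc, mem_unitaryGroup_iff'.1 W.2, one_mul]

lemma conjBy_mul_conjBy (A C : Matrix (Fin d) (Fin d) ℂ) (W : unitaryGroup (Fin d) ℂ) :
    conjBy A W * conjBy C W = conjBy (A * C) W := by
  have hW := mem_unitaryGroup_iff'.1 W.2
  simp only [conjBy]
  calc _ = (W : Matrix (Fin d) (Fin d) ℂ) * A * (star (W : Matrix (Fin d) (Fin d) ℂ) * W) * C *
        star (W : Matrix (Fin d) (Fin d) ℂ) := by simp only [mul_assoc]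
    _ = _ := by rw [hW, mul_one, mul_assoc _ A C]

/-- Contracting `M i j j i` gives `Tr (W A W† W C W†) = Tr (A C)`. -/
lemma sum_moment_cross [IsProbabilityMeasure μ] (A C : Matrix (Fin d) (Fin d) ℂ) :
    ∑ i, ∑ j, moment μ A C i j j i = (A * C).trace := by
  have hW : ∀ W, ∑ i, ∑ j, conjBy A W i j * conjBy C W j i = (A * C).trace := by
    intro W
    rw [← trace_conjBy (A * C) W, ← conjBy_mul_conjBy]
    simp [Matrix.trace, Matrix.mul_apply]
  calc ∑ i, ∑ j, moment μ A C i j j i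
      = ∫ W, ∑ i, ∑ j, conjBy A W i j * conjBy C W j i ∂μ := by
        rw [integral_finsetSum _ fun i _ => integrable_finsetSum _ fun j _ =>
          integrable_entries μ A C i j j i]
        refine Finset.sum_congr rfl fun i _ => ?_
        rw [integral_finsetSum _ fun j _ => integrable_entries μ A C i j j i]
        rfl
    _ = (A * C).trace := by simp [hW]

end HaarSecondMoment

open HaarSecondMoment in
/-- Second-moment Haar integral of a product of two traces:
`∫ Tr[W A W† B]·Tr[W C W† D] dμ(W)
  = (Tr[A]Tr[B]Tr[C]Tr[D] + Tr[AC]Tr[BD])/(d²−1)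
    − (Tr[A]Tr[C]Tr[BD] + Tr[AC]Tr[B]Tr[D])/(d(d²−1))`. -/
theorem haar_integral_trace_prod_second_moment
    (d : ℕ) (hd : 1 < d) (μ : Measure (Matrix.unitaryGroup (Fin d) ℂ))
    [μ.IsHaarMeasure] [IsProbabilityMeasure μ]
    (A B C D : Matrix (Fin d) (Fin d) ℂ) :
    ∫ W : Matrix.unitaryGroup (Fin d) ℂ,
        ((W : Matrix (Fin d) (Fin d) ℂ) * A * star (W : Matrix (Fin d) (Fin d) ℂ) * B).trace *
        ((W : Matrix (Fin d) (Fin d) ℂ) * C * star (W : Matrix (Fin d) (Fin d) ℂ) * D).trace ∂μ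
      = (1 / ((d : ℂ) ^ 2 - 1)) *
          (A.trace * B.trace * C.trace * D.trace + (A * C).trace * (B * D).trace)
        - (1 / ((d : ℂ) * ((d : ℂ) ^ 2 - 1))) *
          (A.trace * C.trace * (B * D).trace + (A * C).trace * B.trace * D.trace) := by
  obtain ⟨b, c, h⟩ := moment_form μ hd A C
  have hmain := integral_trace_eq μ A C b c h B D
  have h1 := integral_trace_eq μ A C b c h 1 1
  have h2 := sum_moment_cross μ A C
  simp only [mul_one, trace_conjBy, Matrix.trace_one, Fintype.card_fin, integral_const,
    probReal_univ, one_smul] at h1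
  have h2' : b * d + c * (d : ℂ) ^ 2 = (A * C).trace := by
    rw [← h2]
    simp only [h, Finset.sum_add_distrib]
    congr 1
    · simp [mul_comm]
    · simp
      ring
  have hd0 : (d : ℂ) ≠ 0 := by
    exact_mod_cast (by omega : d ≠ 0)
  have hd1 : (d : ℂ) ^ 2 - 1 ≠ 0 := by
    rw [sub_ne_zero]
    exact_mod_cast (Nat.one_lt_pow two_ne_zero hd).ne'
  have e : ∀ x y : ℂ, b * x + c * y = (1 / ((d : ℂ) ^ 2 - 1)) *
      (A.trace * C.trace * x + (A * C).trace * y) -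
      (1 / ((d : ℂ) * ((d : ℂ) ^ 2 - 1))) * (A.trace * C.trace * y + (A * C).trace * x) := by
    intro x y
    rw [← h2', h1]
    field_simp
    ring
  refine hmain.trans ?_
  rw [e]
  ring
end

section
/- Let μ be the normalized Haar probability measure on the unitary group U(d_w), and consider the bipartite space H_{w̄} ⊗ H_w of total dimension d_{w̄}·d_w. For any operators A, B on H_{w̄} ⊗ H_w, ∫ Tr[(I_{w̄} ⊗ W) A (I_{w̄} ⊗ W†) B] dμ(W) = (1/d_w)·Tr[Tr_w[A]·Tr_w[B]], where Tr_w is the partial trace over H_w. -/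
/-!
Expanding the trace in coordinates reduces the claim to the second moments of the matrix entries,
`∫ W a b * conj (W e c) dμ = δ_{ae} δ_{bc} / d` (`integral_entry_mul_star_entry`).

For fixed columns `b`, `c` this moment is a `d × d` array in the rows `a`, `e`. Left invariance under
diagonal sign matrices makes its off-diagonal entries vanish, and left invariance under permutation
matrices makes its diagonal constant. Its trace is `∫ (W† W) c b dμ = δ_{bc}`, which fixes the
constant.
-/

open MeasureTheory Matrix Kronecker

/-- Partial trace over the second (right) tensor factor: for an operator `A` on
`H_{w̄} ⊗ H_w` (indexed by `α × β`), `(ptraceRight A) i j = ∑ k, A (i,k) (j,k)`. -/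
noncomputable def ptraceRight {α β : Type*} [Fintype β] (A : Matrix (α × β) (α × β) ℂ) :
    Matrix α α ℂ :=
  Matrix.of fun i j => ∑ k : β, A (i, k) (j, k)

open scoped ComplexConjugate

/-- The diagonal matrix with `-1` at position `a` and `1` elsewhere, as a unitary. -/
noncomputable def signFlip {d : ℕ} (a : Fin d) : Matrix.unitaryGroup (Fin d) ℂ :=
  ⟨Matrix.diagonal fun i => if i = a then -1 else 1, by
    rw [Matrix.mem_unitaryGroup_iff, Matrix.star_eq_conjTranspose, Matrix.diagonal_conjTranspose,
      Matrix.diagonal_mul_diagonal, ← Matrix.diagonal_one]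
    congr 1
    funext i
    by_cases h : i = a <;> simp [h]⟩

/-- The permutation matrix of `σ`, as a unitary; left multiplication by it relabels rows by `σ`. -/
noncomputable def permUnitary {d : ℕ} (σ : Equiv.Perm (Fin d)) : Matrix.unitaryGroup (Fin d) ℂ :=
  ⟨σ.permMatrix ℂ, by
    rw [Matrix.mem_unitaryGroup_iff, Matrix.star_eq_conjTranspose, Matrix.conjTranspose_permMatrix,
      ← Matrix.permMatrix_mul]
    simp⟩

lemma signFlip_mul_apply {d : ℕ} (a : Fin d) (W : Matrix.unitaryGroup (Fin d) ℂ) (i j : Fin d) :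
    (signFlip a * W).1 i j = (if i = a then -1 else 1) * W.1 i j := by
  simp [signFlip, Matrix.diagonal_mul]

lemma permUnitary_mul_apply {d : ℕ} (σ : Equiv.Perm (Fin d)) (W : Matrix.unitaryGroup (Fin d) ℂ)
    (i j : Fin d) : (permUnitary σ * W).1 i j = W.1 (σ i) j := by
  simp [permUnitary, Equiv.Perm.permMatrix, PEquiv.toMatrix_toPEquiv_mul]

lemma integrable_entry_mul_star_entry {d : ℕ} (μ : Measure (Matrix.unitaryGroup (Fin d) ℂ))
    [IsProbabilityMeasure μ] (a b e c : Fin d) :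
    Integrable (fun W : Matrix.unitaryGroup (Fin d) ℂ => W.1 a b * conj (W.1 e c)) μ := by
  have hc : Continuous fun W : Matrix.unitaryGroup (Fin d) ℂ => W.1 a b * conj (W.1 e c) :=
    (continuous_subtype_val.matrix_elem a b).mul
      (Complex.continuous_conj.comp (continuous_subtype_val.matrix_elem e c))
  refine Integrable.of_bound hc.measurable.aestronglyMeasurable 1 (Filter.Eventually.of_forall ?_)
  intro W
  rw [norm_mul, RCLike.norm_conj]
  exact mul_le_one₀ (entry_norm_bound_of_unitary W.2 a b) (norm_nonneg _)
    (entry_norm_bound_of_unitary W.2 e c)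

/-- The second moments of the entries of a Haar-distributed unitary matrix. -/
lemma integral_entry_mul_star_entry {d : ℕ} (μ : Measure (Matrix.unitaryGroup (Fin d) ℂ))
    [μ.IsHaarMeasure] [IsProbabilityMeasure μ] (a b e c : Fin d) :
    ∫ W : Matrix.unitaryGroup (Fin d) ℂ, W.1 a b * conj (W.1 e c) ∂μ
      = if a = e ∧ b = c then 1 / (d : ℂ) else 0 := by
  by_cases hae : a = e
  · subst hae
    have hdiag : ∀ i : Fin d, ∫ W : Matrix.unitaryGroup (Fin d) ℂ, W.1 i b * conj (W.1 i c) ∂μ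
        = ∫ W : Matrix.unitaryGroup (Fin d) ℂ, W.1 a b * conj (W.1 a c) ∂μ := by
      intro i
      have h := integral_mul_left_eq_self (μ := μ)
        (fun W : Matrix.unitaryGroup (Fin d) ℂ => W.1 a b * conj (W.1 a c))
        (permUnitary (Equiv.swap a i))
      simpa only [permUnitary_mul_apply, Equiv.swap_apply_left] using h
    have hsum : ∑ i : Fin d, ∫ W : Matrix.unitaryGroup (Fin d) ℂ, W.1 i b * conj (W.1 i c) ∂μ
        = if b = c then 1 else 0 := by
      rw [← integral_finsetSum _ fun i _ => integrable_entry_mul_star_entry μ i b i c]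
      have hW : ∀ W : Matrix.unitaryGroup (Fin d) ℂ,
          ∑ i, W.1 i b * conj (W.1 i c) = if b = c then 1 else 0 := by
        intro W
        have h := congrFun (congrFun (Matrix.mem_unitaryGroup_iff'.1 W.2) c) b
        rw [Matrix.mul_apply, Matrix.one_apply] at h
        simp only [Matrix.star_apply] at h
        simp only [eq_comm (a := b), ← h]
        exact Finset.sum_congr rfl fun i _ => mul_comm _ _
      simp [hW]
    simp only [hdiag, Finset.sum_const, Finset.card_univ, Fintype.card_fin, nsmul_eq_mul] at hsum
    have hd : (d : ℂ) ≠ 0 := Nat.cast_ne_zero.2 (Fin.pos a).ne'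
    by_cases hbc : b = c
    · simp only [hbc, and_self, if_true] at hsum ⊢
      rw [eq_div_iff hd, mul_comm]
      exact hsum
    · simp only [hbc, and_false, if_false] at hsum ⊢
      exact (mul_eq_zero.1 hsum).resolve_left hd
  · have h := integral_mul_left_eq_self (μ := μ)
      (fun W : Matrix.unitaryGroup (Fin d) ℂ => W.1 a b * conj (W.1 e c)) (signFlip a)
    simp only [signFlip_mul_apply, if_true, if_neg (Ne.symm hae), one_mul, neg_mul,
      integral_neg] at h
    simp only [hae, false_and, if_false]
    exact self_eq_neg.1 h.symm

lemma trace_conj_expand {m d : ℕ} (W : Matrix (Fin d) (Fin d) ℂ)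
    (A B : Matrix (Fin m × Fin d) (Fin m × Fin d) ℂ) :
    (((1 : Matrix (Fin m) (Fin m) ℂ) ⊗ₖ W) * A * ((1 : Matrix (Fin m) (Fin m) ℂ) ⊗ₖ star W)
        * B).trace
      = ∑ i, ∑ a, ∑ j, ∑ e, ∑ c, ∑ b,
          (W a b * conj (W e c)) * (A (i, b) (j, c) * B (j, e) (i, a)) := by
  simp only [Matrix.trace, Matrix.diag_apply, Matrix.mul_apply, Fintype.sum_prod_type,
    Matrix.kroneckerMap_apply, Matrix.one_apply, Matrix.star_apply, ite_mul, mul_ite, one_mul,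
    zero_mul, mul_zero, Finset.sum_ite_irrel, Finset.sum_const_zero, Finset.sum_ite_eq,
    Finset.sum_ite_eq', Finset.mem_univ, if_true, Finset.sum_mul]
  refine Finset.sum_congr rfl fun i _ => Finset.sum_congr rfl fun a _ =>
    Finset.sum_congr rfl fun j _ => Finset.sum_congr rfl fun e _ =>
    Finset.sum_congr rfl fun c _ => Finset.sum_congr rfl fun b _ => ?_
  rw [starRingEnd_apply]
  ring

/-- For the normalized Haar probability measure on `U(d_w)` and any
operators `A`, `B` on the bipartite space `H_{w̄} ⊗ H_w`,
`∫ Tr[(I_{w̄} ⊗ W) A (I_{w̄} ⊗ W†) B] dμ(W) = (1/d_w)·Tr[Tr_w[A]·Tr_w[B]]`. -/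
theorem haar_integral_trace_conj_tensor_id
    (dw dbar : ℕ) (μ : Measure (Matrix.unitaryGroup (Fin dw) ℂ))
    [μ.IsHaarMeasure] [IsProbabilityMeasure μ]
    (A B : Matrix (Fin dbar × Fin dw) (Fin dbar × Fin dw) ℂ) :
    ∫ W : Matrix.unitaryGroup (Fin dw) ℂ,
        ((((1 : Matrix (Fin dbar) (Fin dbar) ℂ) ⊗ₖ (W : Matrix (Fin dw) (Fin dw) ℂ)) * A *
          ((1 : Matrix (Fin dbar) (Fin dbar) ℂ) ⊗ₖ star (W : Matrix (Fin dw) (Fin dw) ℂ)) *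
            B).trace) ∂μ
      = (1 / (dw : ℂ)) * (ptraceRight A * ptraceRight B).trace := by
  simp only [trace_conj_expand]
  have hint : ∀ (a b e c : Fin dw) (z : ℂ), Integrable
      (fun W : Matrix.unitaryGroup (Fin dw) ℂ => (W.1 a b * conj (W.1 e c)) * z) μ :=
    fun a b e c z => (integrable_entry_mul_star_entry μ a b e c).mul_const z
  have hswap : ∫ W : Matrix.unitaryGroup (Fin dw) ℂ, (∑ i, ∑ a, ∑ j, ∑ e, ∑ c, ∑ b,
          (W.1 a b * conj (W.1 e c)) * (A (i, b) (j, c) * B (j, e) (i, a))) ∂μ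
      = ∑ i, ∑ a, ∑ j, ∑ e, ∑ c, ∑ b,
          (if a = e ∧ b = c then 1 / (dw : ℂ) else 0) * (A (i, b) (j, c) * B (j, e) (i, a)) := by
    rw [integral_finsetSum _ (by intros; fun_prop (disch := assumption))]
    refine Finset.sum_congr rfl fun i _ => ?_
    rw [integral_finsetSum _ (by intros; fun_prop (disch := assumption))]
    refine Finset.sum_congr rfl fun a _ => ?_
    rw [integral_finsetSum _ (by intros; fun_prop (disch := assumption))]
    refine Finset.sum_congr rfl fun j _ => ?_
    rw [integral_finsetSum _ (by intros; fun_prop (disch := assumption))]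
    refine Finset.sum_congr rfl fun e _ => ?_
    rw [integral_finsetSum _ (by intros; fun_prop (disch := assumption))]
    refine Finset.sum_congr rfl fun c _ => ?_
    rw [integral_finsetSum _ (by intros; fun_prop (disch := assumption))]
    refine Finset.sum_congr rfl fun b _ => ?_
    rw [integral_mul_const, integral_entry_mul_star_entry]
  rw [hswap]
  simp only [ite_and, ite_mul, zero_mul, Finset.sum_ite_irrel, Finset.sum_const_zero,
    Finset.sum_ite_eq, Finset.sum_ite_eq', Finset.mem_univ, if_true, Matrix.trace,
    Matrix.diag_apply, Matrix.mul_apply, ptraceRight, Matrix.of_apply, Finset.mul_sum,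
    Finset.sum_mul]
  refine Finset.sum_congr rfl fun i _ => ?_
  rw [Finset.sum_comm]
end

section
/- Let μ be the normalized Haar probability measure on the unitary group U(d). For all indices i₁,j₁,l₁,k₁,i₂,j₂,l₂,k₂ in {1,…,d}, ∫ W_{i₁,j₁} · conj(W_{l₁,k₁}) · W_{i₂,j₂} · conj(W_{l₂,k₂}) dμ(W) = (δ_{i₁,l₁}δ_{i₂,l₂}δ_{j₁,k₁}δ_{j₂,k₂} + δ_{i₁,l₂}δ_{i₂,l₁}δ_{j₁,k₂}δ_{j₂,k₁})/(d²−1) − (δ_{i₁,l₁}δ_{i₂,l₂}δ_{j₁,k₂}δ_{j₂,k₁} + δ_{i₁,l₂}δ_{i₂,l₁}δ_{j₁,k₁}δ_{j₂,k₂})/(d(d²−1)). -/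
/-!
Fix the column indices and regard the integral as a tensor `T i₁ l₁ i₂ l₂` in the row indices.
Left invariance of `μ` says that `T` commutes with `V ⊗ V` for every unitary `V`
(`IsInvariantTensor`, `isInvariantTensor_haar`). Three families of unitaries determine all
such `T` (`IsInvariantTensor.exists_coeff`):

* diagonal phases force `T` to vanish unless `{i₁, i₂} = {l₁, l₂}` as multisets;
* permutation matrices make `α = T x x y y` and `β = T x y y x` independent of `x ≠ y`;
* the unitary `(1 + I)/2 + (1 - I)/2 • S`, with `S` a transposition, gives `T x x x x = α + β`.

Hence `T i₁ l₁ i₂ l₂ = α δ_{i₁l₁} δ_{i₂l₂} + β δ_{i₁l₂} δ_{i₂l₁}`. Orthonormality of the columns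
of `W` evaluates the two contractions of `T`, giving `d² α + d β = δ_{j₁k₁} δ_{j₂k₂}` and
`d α + d² β = δ_{j₁k₂} δ_{j₂k₁}`, a nonsingular linear system for `α` and `β` when `d > 1`.
Right invariance of the Haar measure is not needed.
-/

open MeasureTheory Matrix

section InvariantTensor

variable {ι : Type*} [Fintype ι] [DecidableEq ι]

/-- Invariance of the tensor `T i₁ l₁ i₂ l₂` under `V ⊗ conj V ⊗ V ⊗ conj V` for every
unitary `V`, that is, `T` lies in the commutant of the matrices `V ⊗ V`. -/
def IsInvariantTensor (T : ι → ι → ι → ι → ℂ) : Prop :=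
  ∀ V : Matrix ι ι ℂ, V ∈ Matrix.unitaryGroup ι ℂ → ∀ i l m n,
    T i l m n = ∑ a, ∑ b, ∑ c, ∑ e,
      V i a * (starRingEnd ℂ) (V l b) * V m c * (starRingEnd ℂ) (V n e) * T a b c e

/-- Invariance under the diagonal unitary with entry `I` at position `x` and `1` elsewhere. -/
lemma IsInvariantTensor.phase {T : ι → ι → ι → ι → ℂ} (h : IsInvariantTensor T)
    (x i l m n : ι) :
    T i l m n = (if i = x then Complex.I else 1) * (if l = x then -Complex.I else 1) *
      (if m = x then Complex.I else 1) * (if n = x then -Complex.I else 1) * T i l m n := by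
  have hV : Matrix.diagonal (fun a : ι => if a = x then Complex.I else (1 : ℂ))
      ∈ Matrix.unitaryGroup ι ℂ := by
    rw [Matrix.mem_unitaryGroup_iff, Matrix.star_eq_conjTranspose,
      Matrix.diagonal_conjTranspose, Matrix.diagonal_mul_diagonal, ← Matrix.diagonal_one]
    congr 1
    funext a
    by_cases ha : a = x <;> simp [ha]
  have := h _ hV i l m n
  simpa [Matrix.diagonal_apply, apply_ite (starRingEnd ℂ)] using this

lemma IsInvariantTensor.perm {T : ι → ι → ι → ι → ℂ} (h : IsInvariantTensor T)
    (σ : Equiv.Perm ι) (i l m n : ι) : T i l m n = T (σ i) (σ l) (σ m) (σ n) := by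
  have hV : (Matrix.of fun a b : ι => if b = σ a then (1 : ℂ) else 0)
      ∈ Matrix.unitaryGroup ι ℂ := by
    rw [Matrix.mem_unitaryGroup_iff]
    ext a b
    simp [Matrix.mul_apply, Matrix.one_apply, eq_comm]
  have := h _ hV i l m n
  simpa [apply_ite (starRingEnd ℂ)] using this

lemma IsInvariantTensor.eq_zero {T : ι → ι → ι → ι → ℂ} (h : IsInvariantTensor T)
    {i l m n : ι} (h₁ : ¬ (i = l ∧ m = n)) (h₂ : ¬ (i = n ∧ m = l)) : T i l m n = 0 := by
  have key : ∀ z w : ℂ, z ≠ 1 → w = z * w → w = 0 := by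
    intro z w hz hw
    have : (z - 1) * w = 0 := by linear_combination -hw
    exact (mul_eq_zero.mp this).resolve_left (sub_ne_zero.mpr hz)
  have hI : Complex.I ≠ 1 := fun e => by simpa using congrArg Complex.re e
  have hI' : -Complex.I ≠ 1 := fun e => by simpa using congrArg Complex.re e
  have hm : (-1 : ℂ) ≠ 1 := by norm_num
  -- Some index value occurs with different multiplicities in `{i, m}` and `{l, n}`.
  by_cases hil : i = l
  · subst hil
    have hmn : m ≠ n := fun e => h₁ ⟨rfl, e⟩
    by_cases hmi : m = i
    · subst hmi
      refine key _ _ ?_ (h.phase n m m m n)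
      simpa [hmn] using hI'
    · refine key _ _ ?_ (h.phase m i i m n)
      simpa [Ne.symm hmi, hmn.symm] using hI
  · by_cases hin : i = n
    · subst hin
      have hml : m ≠ l := fun e => h₂ ⟨rfl, e⟩
      refine key _ _ ?_ (h.phase l i l m i)
      simpa [hil, hml] using hI'
    · refine key _ _ ?_ (h.phase i i l m n)
      by_cases hmi : m = i
      · simpa [hmi, Ne.symm hil, Ne.symm hin] using hm
      · simpa [hmi, Ne.symm hil, Ne.symm hin] using hI

/-- Invariance under `(1 + I)/2 + (1 - I)/2 • S`, with `S` the transposition of `x` and `y`. -/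
lemma IsInvariantTensor.diag_eq {T : ι → ι → ι → ι → ℂ} (h : IsInvariantTensor T)
    {x y : ι} (hxy : x ≠ y) : T x x x x = T x x y y + T x y y x := by
  have hV : (Matrix.of fun a b : ι => (1 + Complex.I) / 2 * (if b = a then (1 : ℂ) else 0) +
      (1 - Complex.I) / 2 * (if b = Equiv.swap x y a then (1 : ℂ) else 0))
      ∈ Matrix.unitaryGroup ι ℂ := by
    rw [Matrix.mem_unitaryGroup_iff]
    ext a b
    have hsw : (Equiv.swap x y b = a) = (b = Equiv.swap x y a) := propext
      ⟨fun e => by rw [← e, Equiv.swap_apply_self], fun e => by rw [e, Equiv.swap_apply_self]⟩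
    have hab : (a = b) = (b = a) := propext eq_comm
    simp only [Matrix.mul_apply, Matrix.star_apply, Matrix.of_apply, Matrix.one_apply,
      add_mul, mul_add, star_add, star_mul', Finset.sum_add_distrib]
    simp [apply_ite (starRingEnd ℂ)]
    simp only [hsw, hab]
    split_ifs
    · ring
    · linear_combination (-1 / 2 : ℂ) * Complex.I_sq
    · linear_combination (1 / 2 : ℂ) * Complex.I_sq
    · ring
  have hx := h _ hV x x x x
  -- Only the six index patterns with equal row and column multisets survive in `hx`.
  have z := fun i l m n => @IsInvariantTensor.eq_zero ι _ _ T h i l m n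
  have s := h.perm (Equiv.swap x y)
  have s₁ := s x x x x
  have s₂ := s x x y y
  have s₃ := s x y y x
  simp only [Equiv.swap_apply_left, Equiv.swap_apply_right] at s₁ s₂ s₃
  simp [apply_ite (starRingEnd ℂ), add_mul, mul_add, Finset.sum_add_distrib] at hx
  simp only [z x x x y (by simp [hxy]) (by simp [hxy]),
    z x x y x (by simp [hxy.symm]) (by simp [hxy.symm]),
    z x y x x (by simp [hxy]) (by simp [hxy]),
    z y x x x (by simp [hxy.symm]) (by simp [hxy.symm]),
    z x y x y (by simp [hxy]) (by simp [hxy]),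
    z y x y x (by simp [hxy.symm]) (by simp [hxy.symm]),
    z y y y x (by simp [hxy.symm]) (by simp [hxy.symm]),
    z y y x y (by simp [hxy]) (by simp [hxy]),
    z y x y y (by simp [hxy.symm]) (by simp [hxy.symm]),
    z x y y y (by simp [hxy]) (by simp [hxy]), map_ofNat, ← s₁, ← s₂, ← s₃] at hx
  -- Each surviving term carries the coefficient `(1 - I²)² / 16 = 1 / 4`.
  linear_combination 2 * hx +
    (Complex.I ^ 2 - 3) * (T x x x x + T x x y y + T x y y x) / 4 * Complex.I_sq

/-- The commutant of the matrices `V ⊗ V` is spanned by the identity and the flip. -/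
theorem IsInvariantTensor.exists_coeff [Nontrivial ι] {T : ι → ι → ι → ι → ℂ}
    (h : IsInvariantTensor T) : ∃ α β : ℂ, ∀ i l m n,
      T i l m n = α * ((if i = l then 1 else 0) * (if m = n then 1 else 0)) +
        β * ((if i = n then 1 else 0) * (if m = l then 1 else 0)) := by
  obtain ⟨x, y, hxy⟩ := exists_pair_ne ι
  have hperm : ∀ u v : ι, u ≠ v → ∃ σ : Equiv.Perm ι, σ u = x ∧ σ v = y := by
    intro u v huv
    refine ⟨Equiv.swap (Equiv.swap u x v) y * Equiv.swap u x, ?_, by simp⟩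
    have hne : x ≠ Equiv.swap u x v := fun e => huv (by
      have := congrArg (Equiv.swap u x) e
      simpa using this)
    simp [Equiv.swap_apply_of_ne_of_ne hne hxy]
  have hα : ∀ u v : ι, u ≠ v → T u u v v = T x x y y := by
    intro u v huv
    obtain ⟨σ, hu, hv⟩ := hperm u v huv
    rw [h.perm σ, hu, hv]
  have hβ : ∀ u v : ι, u ≠ v → T u v v u = T x y y x := by
    intro u v huv
    obtain ⟨σ, hu, hv⟩ := hperm u v huv
    rw [h.perm σ, hu, hv]
  refine ⟨T x x y y, T x y y x, fun i l m n => ?_⟩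
  by_cases h₁ : i = l ∧ m = n
  · obtain ⟨rfl, rfl⟩ := h₁
    by_cases him : i = m
    · subst him
      obtain ⟨v, hv⟩ := exists_ne i
      rw [h.diag_eq hv.symm, hα i v hv.symm, hβ i v hv.symm]
      simp
    · simp [hα i m him, him]
  · by_cases h₂ : i = n ∧ m = l
    · obtain ⟨rfl, rfl⟩ := h₂
      have him : i ≠ m := fun e => h₁ ⟨e, e.symm⟩
      simp [hβ i m him, him]
    · rw [h.eq_zero h₁ h₂, ite_zero_mul_ite_zero, ite_zero_mul_ite_zero, if_neg h₁, if_neg h₂]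
      simp

end InvariantTensor

section Haar

lemma sum_mul_sum_mul_sum_mul_sum {ι : Type*} [Fintype ι] (f g p q : ι → ℂ) :
    (∑ a, f a) * (∑ b, g b) * (∑ c, p c) * (∑ e, q e) =
      ∑ a, ∑ b, ∑ c, ∑ e, f a * g b * p c * q e := by
  simp only [← Finset.mul_sum, ← Finset.sum_mul]

variable {d : ℕ} (μ : Measure (Matrix.unitaryGroup (Fin d) ℂ))

lemma integrable_entries [IsProbabilityMeasure μ] (i₁ j₁ l₁ k₁ i₂ j₂ l₂ k₂ : Fin d) :
    Integrable (fun W : Matrix.unitaryGroup (Fin d) ℂ =>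
      (W : Matrix (Fin d) (Fin d) ℂ) i₁ j₁ *
        (starRingEnd ℂ) ((W : Matrix (Fin d) (Fin d) ℂ) l₁ k₁) *
        (W : Matrix (Fin d) (Fin d) ℂ) i₂ j₂ *
        (starRingEnd ℂ) ((W : Matrix (Fin d) (Fin d) ℂ) l₂ k₂)) μ := by
  have hc : ∀ i j : Fin d, Continuous fun W : Matrix.unitaryGroup (Fin d) ℂ =>
      (W : Matrix (Fin d) (Fin d) ℂ) i j :=
    fun i j => continuous_subtype_val.matrix_elem i j
  refine Integrable.of_bound (C := 1) (Continuous.aestronglyMeasurable ?_)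
    (Filter.Eventually.of_forall fun W => ?_)
  · exact (((hc _ _).mul (Complex.continuous_conj.comp (hc _ _))).mul (hc _ _)).mul
      (Complex.continuous_conj.comp (hc _ _))
  · have hb := fun i j => entry_norm_bound_of_unitary W.2 i j
    simp only [norm_mul, RCLike.norm_conj]
    exact mul_le_one₀ (mul_le_one₀ (mul_le_one₀ (hb _ _) (norm_nonneg _) (hb _ _))
      (norm_nonneg _) (hb _ _)) (norm_nonneg _) (hb _ _)

/-- Left invariance of `μ`, expanded in matrix entries. -/
lemma isInvariantTensor_haar [μ.IsMulLeftInvariant] [IsProbabilityMeasure μ]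
    (j₁ k₁ j₂ k₂ : Fin d) :
    IsInvariantTensor fun i₁ l₁ i₂ l₂ => ∫ W : Matrix.unitaryGroup (Fin d) ℂ,
      (W : Matrix (Fin d) (Fin d) ℂ) i₁ j₁ *
        (starRingEnd ℂ) ((W : Matrix (Fin d) (Fin d) ℂ) l₁ k₁) *
        (W : Matrix (Fin d) (Fin d) ℂ) i₂ j₂ *
        (starRingEnd ℂ) ((W : Matrix (Fin d) (Fin d) ℂ) l₂ k₂) ∂μ := by
  intro V hV i l m n
  have hint := fun a b c e => integrable_entries μ a j₁ b k₁ c j₂ e k₂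
  beta_reduce
  rw [← integral_mul_left_eq_self _ (⟨V, hV⟩ : Matrix.unitaryGroup (Fin d) ℂ)]
  simp only [← integral_const_mul]
  have h4 := fun a b c e => (hint a b c e).const_mul
    (V i a * (starRingEnd ℂ) (V l b) * V m c * (starRingEnd ℂ) (V n e))
  have h3 := fun a b c => integrable_finsetSum Finset.univ fun e _ => h4 a b c e
  have h2 := fun a b => integrable_finsetSum Finset.univ fun c _ => h3 a b c
  have h1 := fun a => integrable_finsetSum Finset.univ fun b _ => h2 a b
  simp_rw [← integral_finsetSum _ fun e _ => h4 _ _ _ e,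
    ← integral_finsetSum _ fun c _ => h3 _ _ c, ← integral_finsetSum _ fun b _ => h2 _ b,
    ← integral_finsetSum _ fun a _ => h1 a]
  refine integral_congr_ae (Filter.Eventually.of_forall fun W => ?_)
  simp only [Matrix.UnitaryGroup.mul_val, Matrix.mul_apply, map_sum, map_mul]
  rw [sum_mul_sum_mul_sum_mul_sum]
  refine Finset.sum_congr rfl fun a _ => Finset.sum_congr rfl fun b _ =>
    Finset.sum_congr rfl fun c _ => Finset.sum_congr rfl fun e _ => ?_
  ring

lemma sum_col_mul_conj (W : Matrix.unitaryGroup (Fin d) ℂ) (j k : Fin d) :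
    ∑ i, (W : Matrix (Fin d) (Fin d) ℂ) i j *
      (starRingEnd ℂ) ((W : Matrix (Fin d) (Fin d) ℂ) i k) = if j = k then 1 else 0 := by
  have := congrFun (congrFun (Matrix.UnitaryGroup.star_mul_self W) k) j
  simp only [Matrix.mul_apply, Matrix.star_apply, Matrix.one_apply] at this
  rw [← ite_congr (propext (eq_comm (a := k) (b := j))) (fun _ => rfl) (fun _ => rfl), ← this]
  exact Finset.sum_congr rfl fun i _ => mul_comm _ _

end Haar

/-- Entrywise second-moment (Weingarten) formula for the Haar measure on
`U(d)`:
`∫ W_{i₁j₁} conj(W_{l₁k₁}) W_{i₂j₂} conj(W_{l₂k₂}) dμ(W)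
  = (δ_{i₁l₁}δ_{i₂l₂}δ_{j₁k₁}δ_{j₂k₂} + δ_{i₁l₂}δ_{i₂l₁}δ_{j₁k₂}δ_{j₂k₁})/(d²−1)
    − (δ_{i₁l₁}δ_{i₂l₂}δ_{j₁k₂}δ_{j₂k₁} + δ_{i₁l₂}δ_{i₂l₁}δ_{j₁k₁}δ_{j₂k₂})/(d(d²−1))`. -/
theorem haar_integral_entries_second_moment
    (d : ℕ) (hd : 1 < d) (μ : Measure (Matrix.unitaryGroup (Fin d) ℂ))
    [μ.IsHaarMeasure] [IsProbabilityMeasure μ]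
    (i₁ j₁ l₁ k₁ i₂ j₂ l₂ k₂ : Fin d) :
    ∫ W : Matrix.unitaryGroup (Fin d) ℂ,
        (W : Matrix (Fin d) (Fin d) ℂ) i₁ j₁ *
          (starRingEnd ℂ) ((W : Matrix (Fin d) (Fin d) ℂ) l₁ k₁) *
          (W : Matrix (Fin d) (Fin d) ℂ) i₂ j₂ *
          (starRingEnd ℂ) ((W : Matrix (Fin d) (Fin d) ℂ) l₂ k₂) ∂μ
      = ((if i₁ = l₁ then (1 : ℂ) else 0) * (if i₂ = l₂ then 1 else 0) *
            (if j₁ = k₁ then 1 else 0) * (if j₂ = k₂ then 1 else 0) +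
          (if i₁ = l₂ then (1 : ℂ) else 0) * (if i₂ = l₁ then 1 else 0) *
            (if j₁ = k₂ then 1 else 0) * (if j₂ = k₁ then 1 else 0)) / ((d : ℂ) ^ 2 - 1)
        - ((if i₁ = l₁ then (1 : ℂ) else 0) * (if i₂ = l₂ then 1 else 0) *
            (if j₁ = k₂ then 1 else 0) * (if j₂ = k₁ then 1 else 0) +
          (if i₁ = l₂ then (1 : ℂ) else 0) * (if i₂ = l₁ then 1 else 0) *
            (if j₁ = k₁ then 1 else 0) * (if j₂ = k₂ then 1 else 0)) /
            ((d : ℂ) * ((d : ℂ) ^ 2 - 1)) := by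
  have : Nontrivial (Fin d) := Fin.nontrivial_iff_two_le.mpr hd
  obtain ⟨α, β, hT⟩ := (isInvariantTensor_haar μ j₁ k₁ j₂ k₂).exists_coeff
  have hint := fun a b c e => integrable_entries μ a j₁ b k₁ c j₂ e k₂
  have hA : (d : ℂ) ^ 2 * α + d * β =
      (if j₁ = k₁ then 1 else 0) * (if j₂ = k₂ then 1 else 0) := by
    calc (d : ℂ) ^ 2 * α + d * β
        = ∑ a, ∑ b, ∫ W : Matrix.unitaryGroup (Fin d) ℂ,
            (W : Matrix (Fin d) (Fin d) ℂ) a j₁ *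
              (starRingEnd ℂ) ((W : Matrix (Fin d) (Fin d) ℂ) a k₁) *
              (W : Matrix (Fin d) (Fin d) ℂ) b j₂ *
              (starRingEnd ℂ) ((W : Matrix (Fin d) (Fin d) ℂ) b k₂) ∂μ := by
          simp_rw [hT]
          simp [Finset.sum_add_distrib]
          ring
      _ = ∫ W : Matrix.unitaryGroup (Fin d) ℂ, ∑ a, ∑ b,
            (W : Matrix (Fin d) (Fin d) ℂ) a j₁ *
              (starRingEnd ℂ) ((W : Matrix (Fin d) (Fin d) ℂ) a k₁) *
              (W : Matrix (Fin d) (Fin d) ℂ) b j₂ *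
              (starRingEnd ℂ) ((W : Matrix (Fin d) (Fin d) ℂ) b k₂) ∂μ := by
          rw [integral_finsetSum _ fun a _ => integrable_finsetSum _ fun b _ => hint a a b b]
          exact Finset.sum_congr rfl fun a _ =>
            (integral_finsetSum _ fun b _ => hint a a b b).symm
      _ = ∫ _W : Matrix.unitaryGroup (Fin d) ℂ,
            (if j₁ = k₁ then (1 : ℂ) else 0) * (if j₂ = k₂ then 1 else 0) ∂μ := by
          congr 1
          funext W
          rw [← sum_col_mul_conj W j₁ k₁, ← sum_col_mul_conj W j₂ k₂, Finset.sum_mul_sum]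
          exact Finset.sum_congr rfl fun a _ => Finset.sum_congr rfl fun b _ => by ring
      _ = _ := by simp
  have hB : (d : ℂ) * α + d ^ 2 * β =
      (if j₁ = k₂ then 1 else 0) * (if j₂ = k₁ then 1 else 0) := by
    calc (d : ℂ) * α + d ^ 2 * β
        = ∑ a, ∑ b, ∫ W : Matrix.unitaryGroup (Fin d) ℂ,
            (W : Matrix (Fin d) (Fin d) ℂ) a j₁ *
              (starRingEnd ℂ) ((W : Matrix (Fin d) (Fin d) ℂ) b k₁) *
              (W : Matrix (Fin d) (Fin d) ℂ) b j₂ *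
              (starRingEnd ℂ) ((W : Matrix (Fin d) (Fin d) ℂ) a k₂) ∂μ := by
          simp_rw [hT]
          simp [Finset.sum_add_distrib]
          ring
      _ = ∫ W : Matrix.unitaryGroup (Fin d) ℂ, ∑ a, ∑ b,
            (W : Matrix (Fin d) (Fin d) ℂ) a j₁ *
              (starRingEnd ℂ) ((W : Matrix (Fin d) (Fin d) ℂ) b k₁) *
              (W : Matrix (Fin d) (Fin d) ℂ) b j₂ *
              (starRingEnd ℂ) ((W : Matrix (Fin d) (Fin d) ℂ) a k₂) ∂μ := by
          rw [integral_finsetSum _ fun a _ => integrable_finsetSum _ fun b _ => hint a b b a]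
          exact Finset.sum_congr rfl fun a _ =>
            (integral_finsetSum _ fun b _ => hint a b b a).symm
      _ = ∫ _W : Matrix.unitaryGroup (Fin d) ℂ,
            (if j₁ = k₂ then (1 : ℂ) else 0) * (if j₂ = k₁ then 1 else 0) ∂μ := by
          congr 1
          funext W
          rw [← sum_col_mul_conj W j₁ k₂, ← sum_col_mul_conj W j₂ k₁, Finset.sum_mul_sum]
          exact Finset.sum_congr rfl fun a _ => Finset.sum_congr rfl fun b _ => by ring
      _ = _ := by simp
  have hd0 : (d : ℂ) ≠ 0 := by
    exact_mod_cast (by omega : d ≠ 0)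
  have hd1 : (d : ℂ) ^ 2 - 1 ≠ 0 := by
    rw [sub_ne_zero]
    exact_mod_cast (Nat.one_lt_pow two_ne_zero hd).ne'
  have hα : α = ((if j₁ = k₁ then 1 else 0) * (if j₂ = k₂ then 1 else 0)) / ((d : ℂ) ^ 2 - 1) -
      ((if j₁ = k₂ then 1 else 0) * (if j₂ = k₁ then 1 else 0)) / (d * ((d : ℂ) ^ 2 - 1)) := by
    rw [← hA, ← hB]
    field_simp
    ring
  have hβ : β = ((if j₁ = k₂ then 1 else 0) * (if j₂ = k₁ then 1 else 0)) / ((d : ℂ) ^ 2 - 1) -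
      ((if j₁ = k₁ then 1 else 0) * (if j₂ = k₂ then 1 else 0)) / (d * ((d : ℂ) ^ 2 - 1)) := by
    rw [← hA, ← hB]
    field_simp
    ring
  rw [hT, hα, hβ]
  ring
end

section
/- Let H = H_S ⊗ H_{S̄} be a bipartite space of total dimension d and let μ be the normalized Haar probability measure on the unitary group U(d). For arbitrary operators A, B on H, ∫ (Tr[Tr_{S̄}[w A w†]·Tr_{S̄}[B]])² dμ(w) = (1/(d²−1))·((d/dim S)²·Tr[A]²·Tr[B]² + (d/dim S)·Tr[A²]·Tr[(Tr_{S̄}[B])²]) − (1/(d(d²−1)))·((d/dim S)·Tr[A]²·Tr[(Tr_{S̄}[B])²] + (d/dim S)²·Tr[A²]·Tr[B]²), where dim S = dim H_S. -/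
/-!
Since `Tr[Tr_{S̄}[X] · Tr_{S̄}[B]] = Tr[X (Tr_{S̄}[B] ⊗ 1)]`, the claim reduces to the second moment
`∫ Tr[w A w† M] Tr[w A w† N] dμ(w)` for arbitrary `M`, `N`. Left invariance of `μ` makes this a
symmetric bilinear form in `(M, N)` invariant under simultaneous unitary conjugation.

Every such form is `a Tr[M] Tr[N] + b Tr[M N]` (`exists_coeff_of_unitary_invariant`): by polarization
and `ℂ`-bilinearity it suffices to treat `M = N` Hermitian, by the spectral theorem `M` diagonal, and
on diagonal matrices invariance under permutation matrices leaves only two free coefficients.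

The constants `a`, `b` follow from two contractions: `M = N = 1` gives `a d² + b d = Tr[A]²`, and
summing over the matrix units `M = E_ij`, `N = E_ji` gives `a d + b d² = Tr[A²]`.
-/

open MeasureTheory Matrix

/-! ### Unitarily invariant bilinear forms on matrices -/

section InvariantForms

variable {n : Type*} [Fintype n] [DecidableEq n]

/-- Permutation matrices act on the diagonal matrix units by permuting them. -/
lemma exists_unitary_conj_single (σ : Equiv.Perm n) :
    ∃ U ∈ Matrix.unitaryGroup n ℂ,
      ∀ i, U * single i i (1 : ℂ) * star U = single (σ i) (σ i) 1 := by
  have key : ∀ M : Matrix n n ℂ, (σ⁻¹).permMatrix ℂ * M * star ((σ⁻¹).permMatrix ℂ)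
      = M.submatrix ⇑(σ⁻¹) ⇑(σ⁻¹) := by
    intro M
    rw [star_eq_conjTranspose, conjTranspose_permMatrix, inv_inv,
      PEquiv.toMatrix_toPEquiv_mul, PEquiv.mul_toMatrix_toPEquiv]
    rfl
  refine ⟨(σ⁻¹).permMatrix ℂ, ?_, fun i => ?_⟩
  · rw [Matrix.mem_unitaryGroup_iff]
    have := key 1
    rw [mul_one] at this
    rw [this, submatrix_one_equiv]
  · rw [key]
    ext k l
    simp [single_apply, Equiv.eq_symm_apply]

/-- The symmetric group acts doubly transitively. -/
lemma exists_perm_map_pair {m : Type*} [DecidableEq m] {i j i' j' : m} (h : i ≠ j) (h' : i' ≠ j') :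
    ∃ σ : Equiv.Perm m, σ i = i' ∧ σ j = j' := by
  refine ⟨Equiv.swap (Equiv.swap i i' j) j' * Equiv.swap i i', ?_, ?_⟩
  · have h1 : i' ≠ Equiv.swap i i' j := fun h2 => h (by
      have := congrArg (Equiv.swap i i') h2
      simpa using this)
    simp [Equiv.swap_apply_of_ne_of_ne h1 h']
  · simp

/-- The quadratic form `M ↦ f M M` of a unitarily invariant bilinear form `f` is determined on
Hermitian matrices by its values on diagonal ones, where permutation invariance leaves only the
coefficients of `(Tr M)²` and `Tr M²`. -/
lemma exists_coeff_of_isHermitian [Nontrivial n]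
    (f : Matrix n n ℂ →ₗ[ℂ] Matrix n n ℂ →ₗ[ℂ] ℂ)
    (hinv : ∀ U ∈ Matrix.unitaryGroup n ℂ, ∀ M N,
      f (U * M * star U) (U * N * star U) = f M N) :
    ∃ a b : ℂ, ∀ M : Matrix n n ℂ, M.IsHermitian →
      f M M = a * M.trace ^ 2 + b * (M * M).trace := by
  obtain ⟨i₀, j₀, h₀⟩ := exists_pair_ne n
  have hperm : ∀ (σ : Equiv.Perm n) (i j : n),
      f (single (σ i) (σ i) 1) (single (σ j) (σ j) 1) = f (single i i 1) (single j j 1) := by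
    intro σ i j
    obtain ⟨U, hU, h⟩ := exists_unitary_conj_single σ
    rw [← h i, ← h j, hinv U hU]
  set a := f (single i₀ i₀ 1) (single j₀ j₀ 1) with ha
  set c := f (single i₀ i₀ 1) (single i₀ i₀ 1) with hc
  have hval : ∀ i j : n, f (single i i 1) (single j j 1) = a + if i = j then c - a else 0 := by
    intro i j
    split_ifs with hij
    · subst hij
      rw [← hperm (Equiv.swap i i₀) i i]
      simp [hc]
    · obtain ⟨σ, h1, h2⟩ := exists_perm_map_pair hij h₀
      rw [← hperm σ i j, h1, h2, add_zero]
  have hdiag : ∀ v : n → ℂ, f (diagonal v) (diagonal v)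
      = a * (diagonal v).trace ^ 2 + (c - a) * (diagonal v * diagonal v).trace := by
    intro v
    have hv : diagonal v = ∑ i, v i • single i i (1 : ℂ) := by
      rw [← sum_single_eq_diagonal]
      simp [smul_single]
    conv_lhs => rw [hv]
    simp only [map_sum, map_smul, LinearMap.sum_apply, LinearMap.smul_apply, smul_eq_mul, hval]
    rw [diagonal_mul_diagonal, trace_diagonal, trace_diagonal, sq, Finset.sum_mul_sum,
      Finset.mul_sum, Finset.mul_sum, ← Finset.sum_add_distrib]
    refine Finset.sum_congr rfl fun i _ => ?_
    simp only [mul_add, Finset.sum_add_distrib, mul_ite, mul_zero, Finset.sum_ite_eq',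
      Finset.mem_univ, if_true, Finset.mul_sum]
    congr 1
    · exact Finset.sum_congr rfl fun j _ => by ring
    · ring
  refine ⟨a, c - a, fun M hM => ?_⟩
  set U := hM.eigenvectorUnitary
  set D : Matrix n n ℂ := diagonal (RCLike.ofReal ∘ hM.eigenvalues)
  have hM' : M = (U : Matrix n n ℂ) * D * star (U : Matrix n n ℂ) := by
    have := hM.spectral_theorem
    rwa [Unitary.conjStarAlgAut_apply] at this
  have hU : star (U : Matrix n n ℂ) * U = 1 := Matrix.mem_unitaryGroup_iff'.mp U.2
  have ht : M.trace = D.trace := by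
    rw [hM', Matrix.trace_mul_comm, ← Matrix.mul_assoc, hU, Matrix.one_mul]
  have ht2 : (M * M).trace = (D * D).trace := by
    have : M * M = (U : Matrix n n ℂ) * (D * D) * star (U : Matrix n n ℂ) := by
      rw [hM']
      calc _ = (U : Matrix n n ℂ) * D * (star (U : Matrix n n ℂ) * U) * D
              * star (U : Matrix n n ℂ) := by simp only [Matrix.mul_assoc]
        _ = _ := by rw [hU, Matrix.mul_one]; simp only [Matrix.mul_assoc]
    rw [this, Matrix.trace_mul_comm, ← Matrix.mul_assoc, hU, Matrix.one_mul]
  have hf : f M M = f D D := by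
    conv_lhs => rw [hM']
    exact hinv U U.2 D D
  rw [ht, ht2, hf, hdiag]

/-- Unitarily invariant symmetric bilinear forms on matrices are spanned by `Tr M · Tr N` and
`Tr (M N)`. -/
lemma exists_coeff_of_unitary_invariant [Nontrivial n]
    (f : Matrix n n ℂ →ₗ[ℂ] Matrix n n ℂ →ₗ[ℂ] ℂ)
    (hsymm : ∀ M N, f M N = f N M)
    (hinv : ∀ U ∈ Matrix.unitaryGroup n ℂ, ∀ M N,
      f (U * M * star U) (U * N * star U) = f M N) :
    ∃ a b : ℂ, ∀ M N, f M N = a * (M.trace * N.trace) + b * (M * N).trace := by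
  obtain ⟨a, b, h⟩ := exists_coeff_of_isHermitian f hinv
  refine ⟨a, b, ?_⟩
  -- Polarization on the real subspace of Hermitian matrices.
  have hherm : ∀ H K : Matrix n n ℂ, H.IsHermitian → K.IsHermitian →
      f H K = a * (H.trace * K.trace) + b * (H * K).trace := by
    intro H K hH hK
    have h1 := h (H + K) (hH.add hK)
    have h2 := h H hH
    have h3 := h K hK
    have h4 := hsymm H K
    have h5 := Matrix.trace_mul_comm H K
    simp only [map_add, LinearMap.add_apply, Matrix.trace_add, Matrix.add_mul,
      Matrix.mul_add] at h1
    linear_combination (1 / 2 : ℂ) * h1 - (1 / 2 : ℂ) * h2 - (1 / 2 : ℂ) * h3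
      + (1 / 2 : ℂ) * h4 - (1 / 2 : ℂ) * b * h5
  -- Extension to all matrices through `M = ℜ M + i ℑ M`.
  intro M N
  have hd : ∀ M : Matrix n n ℂ, ∃ H K : Matrix n n ℂ, H.IsHermitian ∧ K.IsHermitian ∧
      M = H + Complex.I • K := fun M =>
    ⟨realPart M, imaginaryPart M, (realPart M).2, (imaginaryPart M).2,
      (realPart_add_I_smul_imaginaryPart M).symm⟩
  obtain ⟨H, K, hH, hK, rfl⟩ := hd M
  obtain ⟨H', K', hH', hK', rfl⟩ := hd N
  simp only [map_add, map_smul, LinearMap.add_apply, LinearMap.smul_apply, smul_eq_mul,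
    hherm _ _ hH hH', hherm _ _ hH hK', hherm _ _ hK hH', hherm _ _ hK hK', Matrix.trace_add,
    Matrix.add_mul, Matrix.mul_add, Matrix.trace_smul, Matrix.smul_mul, Matrix.mul_smul]
  ring

end InvariantForms

/-! ### Second moments of the Haar measure -/

section SecondMoment

variable {n : Type*} [Fintype n] [DecidableEq n]

instance compactSpace_unitaryGroup : CompactSpace (Matrix.unitaryGroup n ℂ) := by
  refine isCompact_iff_compactSpace.mp (IsCompact.of_isClosed_subset
    (isCompact_univ_pi fun _ : n => isCompact_univ_pi fun _ : n =>
      isCompact_closedBall (0 : ℂ) 1) ?_ ?_)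
  · have : (Matrix.unitaryGroup n ℂ : Set (Matrix n n ℂ)) = {U | U * star U = 1} := by
      ext U
      exact Matrix.mem_unitaryGroup_iff
    rw [this]
    exact isClosed_eq (by fun_prop) continuous_const
  · intro U hU i _ j _
    simpa using entry_norm_bound_of_unitary hU i j

/-- The function `w ↦ Tr[w A w† M]`. -/
noncomputable def conjTrace (A M : Matrix n n ℂ) (w : Matrix.unitaryGroup n ℂ) : ℂ :=
  ((w : Matrix n n ℂ) * A * star (w : Matrix n n ℂ) * M).trace

lemma continuous_conjTrace (A M : Matrix n n ℂ) : Continuous (conjTrace A M) := by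
  unfold conjTrace
  fun_prop

lemma integrable_conjTrace_mul (μ : Measure (Matrix.unitaryGroup n ℂ)) [IsProbabilityMeasure μ]
    (A M N : Matrix n n ℂ) : Integrable (fun w => conjTrace A M w * conjTrace A N w) μ :=
  ((continuous_conjTrace A M).mul (continuous_conjTrace A N)).integrable_of_hasCompactSupport
    (HasCompactSupport.of_compactSpace _)

lemma conjTrace_add (A M N : Matrix n n ℂ) (w : Matrix.unitaryGroup n ℂ) :
    conjTrace A (M + N) w = conjTrace A M w + conjTrace A N w := by
  simp [conjTrace, Matrix.mul_add]

lemma conjTrace_smul (A : Matrix n n ℂ) (c : ℂ) (M : Matrix n n ℂ)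
    (w : Matrix.unitaryGroup n ℂ) : conjTrace A (c • M) w = c * conjTrace A M w := by
  simp [conjTrace]

/-- Conjugating `M` amounts to a left translation of `w`. -/
lemma conjTrace_conj (A M : Matrix n n ℂ) (U w : Matrix.unitaryGroup n ℂ) :
    conjTrace A ((U : Matrix n n ℂ) * M * star (U : Matrix n n ℂ)) w
      = conjTrace A M (U⁻¹ * w) := by
  have h : ((U⁻¹ * w : Matrix.unitaryGroup n ℂ) : Matrix n n ℂ)
      = star (U : Matrix n n ℂ) * w := rfl
  unfold conjTrace
  rw [h, star_mul, star_star, ← Matrix.mul_assoc, Matrix.trace_mul_comm]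
  simp only [Matrix.mul_assoc]

/-- The bilinear form `(M, N) ↦ ∫ Tr[w A w† M] Tr[w A w† N] dμ(w)`. -/
noncomputable def momentForm (μ : Measure (Matrix.unitaryGroup n ℂ)) [IsProbabilityMeasure μ]
    (A : Matrix n n ℂ) : Matrix n n ℂ →ₗ[ℂ] Matrix n n ℂ →ₗ[ℂ] ℂ :=
  LinearMap.mk₂ ℂ (fun M N => ∫ w, conjTrace A M w * conjTrace A N w ∂μ)
    (fun M M' N => by
      simp only [conjTrace_add, add_mul]
      exact integral_add (integrable_conjTrace_mul μ A M N) (integrable_conjTrace_mul μ A M' N))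
    (fun c M N => by
      simp only [conjTrace_smul, mul_assoc, smul_eq_mul]
      exact integral_const_mul _ _)
    (fun M N N' => by
      simp only [conjTrace_add, mul_add]
      exact integral_add (integrable_conjTrace_mul μ A M N) (integrable_conjTrace_mul μ A M N'))
    (fun c M N => by
      simp only [conjTrace_smul, mul_left_comm _ c, smul_eq_mul]
      exact integral_const_mul _ _)

lemma momentForm_apply (μ : Measure (Matrix.unitaryGroup n ℂ)) [IsProbabilityMeasure μ]
    (A M N : Matrix n n ℂ) :
    momentForm μ A M N = ∫ w, conjTrace A M w * conjTrace A N w ∂μ := rfl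

lemma conjTrace_one (A : Matrix n n ℂ) (w : Matrix.unitaryGroup n ℂ) :
    conjTrace A 1 w = A.trace := by
  have hw : star (w : Matrix n n ℂ) * w = 1 := Matrix.mem_unitaryGroup_iff'.mp w.2
  rw [conjTrace, Matrix.mul_one, Matrix.trace_mul_comm, ← Matrix.mul_assoc, hw, Matrix.one_mul]

/-- Contracting with the swap operator `∑ E_ij ⊗ E_ji` turns the product of traces into the trace
of the product. -/
lemma sum_conjTrace_single (A : Matrix n n ℂ) (w : Matrix.unitaryGroup n ℂ) :
    ∑ i, ∑ j, conjTrace A (single i j 1) w * conjTrace A (single j i 1) w = (A * A).trace := by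
  have hw : star (w : Matrix n n ℂ) * w = 1 := Matrix.mem_unitaryGroup_iff'.mp w.2
  set X := (w : Matrix n n ℂ) * A * star (w : Matrix n n ℂ) with hX
  have hs : ∀ i j, conjTrace A (single i j 1) w = X j i := by
    intro i j
    rw [conjTrace, ← hX, Matrix.trace_mul_single]
    simp
  have hXX : X * X = (w : Matrix n n ℂ) * (A * A) * star (w : Matrix n n ℂ) := by
    calc _ = (w : Matrix n n ℂ) * A * (star (w : Matrix n n ℂ) * w) * A
            * star (w : Matrix n n ℂ) := by simp only [hX, Matrix.mul_assoc]
      _ = _ := by rw [hw, Matrix.mul_one]; simp only [Matrix.mul_assoc]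
  have ht : (X * X).trace = (A * A).trace := by
    rw [hXX, Matrix.trace_mul_comm, ← Matrix.mul_assoc, hw, Matrix.one_mul]
  rw [← ht]
  simp only [hs, Matrix.trace, Matrix.diag, Matrix.mul_apply]
  exact Finset.sum_congr rfl fun i _ => Finset.sum_congr rfl fun j _ => mul_comm _ _

/-- The second moment formula for the Haar measure on `U(d)`. -/
lemma integral_conjTrace_sq (hd : 1 < Fintype.card n)
    (μ : Measure (Matrix.unitaryGroup n ℂ)) [μ.IsHaarMeasure] [IsProbabilityMeasure μ]
    (A M : Matrix n n ℂ) :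
    ∫ w, conjTrace A M w ^ 2 ∂μ
      = (1 / ((Fintype.card n : ℂ) ^ 2 - 1)) *
          (A.trace ^ 2 * M.trace ^ 2 + (A * A).trace * (M * M).trace)
        - (1 / ((Fintype.card n : ℂ) * ((Fintype.card n : ℂ) ^ 2 - 1))) *
          (A.trace ^ 2 * (M * M).trace + (A * A).trace * M.trace ^ 2) := by
  have : Nontrivial n := Fintype.one_lt_card_iff_nontrivial.mp hd
  obtain ⟨a, b, h⟩ := exists_coeff_of_unitary_invariant (momentForm μ A)
    (fun M N => by simp only [momentForm_apply, mul_comm])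
    (fun U hU M N => by
      simp only [momentForm_apply]
      have h1 := fun M w => conjTrace_conj A M ⟨U, hU⟩ w
      simp only at h1
      simp only [h1]
      exact integral_mul_left_eq_self (fun w => conjTrace A M w * conjTrace A N w)
        (⟨U, hU⟩ : Matrix.unitaryGroup n ℂ)⁻¹)
  set d : ℂ := (Fintype.card n : ℂ) with hdd
  have e1 : A.trace ^ 2 = a * d ^ 2 + b * d := by
    have h1 := h 1 1
    simp only [momentForm_apply, conjTrace_one, integral_const, probReal_univ, one_smul,
      Matrix.mul_one, Matrix.trace_one] at h1
    rw [sq, h1]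
    ring
  have e2 : (A * A).trace = a * d + b * d ^ 2 := by
    have h1 : ∑ i, ∑ j, momentForm μ A (single i j 1) (single j i 1) = (A * A).trace := by
      simp only [momentForm_apply]
      have h2 : ∀ i : n, ∑ j, ∫ w, conjTrace A (single i j 1) w * conjTrace A (single j i 1) w ∂μ
          = ∫ w, ∑ j, conjTrace A (single i j 1) w * conjTrace A (single j i 1) w ∂μ := fun i =>
        (integral_finsetSum _ fun j _ => integrable_conjTrace_mul μ A _ _).symm
      simp only [h2]
      rw [← integral_finsetSum _ fun i _ =>
        integrable_finsetSum _ fun j _ => integrable_conjTrace_mul μ A _ _]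
      simp [sum_conjTrace_single]
    rw [← h1]
    have h3 : ∀ i j : n, momentForm μ A (single i j 1) (single j i 1)
        = a * (if i = j then 1 else 0) + b := by
      intro i j
      rw [h]
      by_cases hij : i = j
      · subst hij
        simp
      · simp [hij, Matrix.trace_single_eq_of_ne]
    simp only [h3, Finset.sum_add_distrib, ← Finset.mul_sum]
    simp [← hdd]
    ring
  have hd0 : d ≠ 0 := by
    rw [hdd]
    exact_mod_cast (by lia : Fintype.card n ≠ 0)
  have hd1 : d ^ 2 - 1 ≠ 0 := by
    have h1 : Fintype.card n ^ 2 ≠ 1 := by nlinarith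
    rw [sub_ne_zero, hdd]
    exact_mod_cast h1
  have h4 := h M M
  simp only [momentForm_apply] at h4
  simp only [sq (conjTrace A M _)]
  rw [h4, e1, e2]
  field_simp
  ring

end SecondMoment

/-! ### Partial trace -/

section PartialTrace

variable {α β : Type*} [Fintype α] [Fintype β]

/-- The partial trace is dual to tensoring with the identity. -/
lemma trace_ptraceRight_mul [DecidableEq β] (X : Matrix (α × β) (α × β) ℂ) (C : Matrix α α ℂ) :
    (ptraceRight X * C).trace = (X * kroneckerMap (· * ·) C (1 : Matrix β β ℂ)).trace := by
  simp only [Matrix.trace, Matrix.diag, Matrix.mul_apply, ptraceRight, Matrix.of_apply,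
    Fintype.sum_prod_type, kroneckerMap_apply, Matrix.one_apply, mul_ite, mul_one, mul_zero,
    Finset.sum_ite_eq', Finset.mem_univ, if_true, Finset.sum_mul]
  exact Finset.sum_congr rfl fun i _ => Finset.sum_comm

lemma trace_ptraceRight (B : Matrix (α × β) (α × β) ℂ) : (ptraceRight B).trace = B.trace := by
  simp [Matrix.trace, ptraceRight, Fintype.sum_prod_type]

end PartialTrace

/-- Let `H = H_S ⊗ H_{S̄}` have total dimension `d` and let `μ` be the
normalized Haar probability measure on `U(d)`. For arbitrary operators `A`, `B` on `H`,
`∫ (Tr[Tr_{S̄}[w A w†]·Tr_{S̄}[B]])² dμ(w)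
  = (1/(d²−1))·((d/dim S)²·Tr[A]²·Tr[B]² + (d/dim S)·Tr[A²]·Tr[(Tr_{S̄}[B])²])
    − (1/(d(d²−1)))·((d/dim S)·Tr[A]²·Tr[(Tr_{S̄}[B])²] + (d/dim S)²·Tr[A²]·Tr[B]²)`. -/
theorem haar_integral_sq_trace_ptrace
    (s sb : Type*) [Fintype s] [Fintype sb] [DecidableEq s] [DecidableEq sb]
    (hd : 1 < Fintype.card (s × sb))
    (μ : Measure (Matrix.unitaryGroup (s × sb) ℂ))
    [μ.IsHaarMeasure] [IsProbabilityMeasure μ]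
    (A B : Matrix (s × sb) (s × sb) ℂ) :
    ∫ w : Matrix.unitaryGroup (s × sb) ℂ,
        ((ptraceRight ((w : Matrix (s × sb) (s × sb) ℂ) * A *
            star (w : Matrix (s × sb) (s × sb) ℂ)) * ptraceRight B).trace) ^ 2 ∂μ
      = (1 / ((Fintype.card (s × sb) : ℂ) ^ 2 - 1)) *
          (((Fintype.card (s × sb) : ℂ) / (Fintype.card s : ℂ)) ^ 2 *
              A.trace ^ 2 * B.trace ^ 2 +
            ((Fintype.card (s × sb) : ℂ) / (Fintype.card s : ℂ)) *
              (A * A).trace * (ptraceRight B * ptraceRight B).trace)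
        - (1 / ((Fintype.card (s × sb) : ℂ) *
              ((Fintype.card (s × sb) : ℂ) ^ 2 - 1))) *
          (((Fintype.card (s × sb) : ℂ) / (Fintype.card s : ℂ)) *
              A.trace ^ 2 * (ptraceRight B * ptraceRight B).trace +
            ((Fintype.card (s × sb) : ℂ) / (Fintype.card s : ℂ)) ^ 2 *
              (A * A).trace * B.trace ^ 2) := by
  set C := ptraceRight B with hC
  set M : Matrix (s × sb) (s × sb) ℂ := kroneckerMap (· * ·) C (1 : Matrix sb sb ℂ) with hM
  have hs : (Fintype.card s : ℂ) ≠ 0 := by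
    have h : Fintype.card s ≠ 0 := fun h => by
      rw [Fintype.card_prod, h, zero_mul] at hd
      lia
    exact_mod_cast h
  have hr : (Fintype.card (s × sb) : ℂ) / (Fintype.card s : ℂ) = Fintype.card sb := by
    rw [Fintype.card_prod, Nat.cast_mul]
    field_simp
  have hMt : M.trace = (Fintype.card sb : ℂ) * B.trace := by
    rw [hM, Matrix.trace_kronecker, Matrix.trace_one, hC, trace_ptraceRight, mul_comm]
  have hMM : (M * M).trace = (Fintype.card sb : ℂ) * (C * C).trace := by
    rw [hM, ← Matrix.mul_kronecker_mul, Matrix.trace_kronecker, Matrix.one_mul,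
      Matrix.trace_one, mul_comm]
  have h := integral_conjTrace_sq hd μ A M
  simp only [conjTrace] at h
  simp only [trace_ptraceRight_mul]
  rw [h, hMt, hMM, hr]
  ring
end

section
/- Consider an n-qubit system and a subset S_κ of n_κ qubits. Let μ be the normalized Haar probability measure on U(2ⁿ). For any pure-state density matrix ρ₀ on n qubits (i.e. Tr[ρ₀²] = 1), the average purity of the reduced state satisfies ∫ Tr[(Tr_{S̄_κ}[U ρ₀ U†])²] dμ(U) = (2^{n−n_κ} + 2^{n_κ})/(2ⁿ + 1). -/
/-!
A density matrix of purity one is a projector `v v†` onto a unit vector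
(`exists_pure_vector`), so `U ρ₀ U†` is `w w†` with `w = U v`, and the reduced purity is a sum of
monomials `w i * conj (w j) * w k * conj (w l)` (`trace_ptraceCompl_sq`). The theorem thus follows
from the second-moment formula (`moment_formula`), where `D` is the dimension:
`∫ w i * conj (w j) * w k * conj (w l) = (δ_ij δ_kl + δ_il δ_kj) / (D (D + 1))`.

The moment formula uses only left invariance of Haar measure under two kinds of unitaries.
Diagonal phases kill every moment in which `{i, k}` and `{j, l}` differ as multisets. A reflection
mixing two coordinates with coefficients `3/5` and `4/5` shows that `∫ |w i|⁴` is the same for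
all `i` and is twice `∫ |w i|² |w j|²` for `i ≠ j`; the normalization `‖w‖ = 1` then fixes
the value. Writing an index as a pair (inside `S`, outside `S`), the purity sum picks up
`∑ (δ_ab + δ_cd) = d_A d_B² + d_A² d_B` with `d_A d_B = D`.
-/

open MeasureTheory Matrix ComplexOrder

/-- Computational basis states of an `n`-qubit system. -/
abbrev QubitBasis (n : ℕ) := Fin n → Fin 2

/-- Combine an assignment on a subset `S` of qubits with one on its complement. -/
def mergeQ {n : ℕ} (S : Finset (Fin n)) (a : {i : Fin n // i ∈ S} → Fin 2)
    (b : {i : Fin n // i ∉ S} → Fin 2) : QubitBasis n :=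
  fun i => if h : i ∈ S then a ⟨i, h⟩ else b ⟨i, h⟩

/-- Partial trace over the qubits outside `S` (i.e. `Tr_{S̄}`), producing an operator on
the qubits in `S`. -/
noncomputable def ptraceCompl {n : ℕ} (S : Finset (Fin n))
    (A : Matrix (QubitBasis n) (QubitBasis n) ℂ) :
    Matrix ({i : Fin n // i ∈ S} → Fin 2) ({i : Fin n // i ∈ S} → Fin 2) ℂ :=
  Matrix.of fun a b =>
    ∑ c : {i : Fin n // i ∉ S} → Fin 2, A (mergeQ S a c) (mergeQ S b c)

/-- Extend an operator on the qubits in `S` to an `n`-qubit operator acting as the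
identity on the qubits outside `S`. -/
noncomputable def embedQ {n : ℕ} (S : Finset (Fin n))
    (W : Matrix ({i : Fin n // i ∈ S} → Fin 2) ({i : Fin n // i ∈ S} → Fin 2) ℂ) :
    Matrix (QubitBasis n) (QubitBasis n) ℂ :=
  Matrix.of fun x y =>
    (if ∀ i : {i : Fin n // i ∉ S}, x i.1 = y i.1 then (1 : ℂ) else 0) *
      W (fun i => x i.1) (fun i => y i.1)

open scoped ComplexConjugate

section HaarMoments

variable {ι : Type*} [Fintype ι] [DecidableEq ι]

/-! ### Fourth moments of a rotated vector -/

/-- The monomial `w i * conj (w j) * w k * conj (w l)` in the coordinates of the rotated vector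
`w = U v`. It is the product of the `(i, j)` and `(k, l)` entries of the projector `w w†`. -/
noncomputable def quartic (v : ι → ℂ) (i j k l : ι) (U : Matrix.unitaryGroup ι ℂ) : ℂ :=
  ((U : Matrix ι ι ℂ) *ᵥ v) i * conj (((U : Matrix ι ι ℂ) *ᵥ v) j) *
    ((U : Matrix ι ι ℂ) *ᵥ v) k * conj (((U : Matrix ι ι ℂ) *ᵥ v) l)

/-- The balanced fourth moment `∫ w i * conj (w j) * w k * conj (w l)` of `w = U v`. -/
noncomputable def moment (μ : Measure (Matrix.unitaryGroup ι ℂ)) (v : ι → ℂ)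
    (i j k l : ι) : ℂ :=
  ∫ U, quartic v i j k l U ∂μ

lemma continuous_rotated (v : ι → ℂ) (i : ι) :
    Continuous fun U : Matrix.unitaryGroup ι ℂ => ((U : Matrix ι ι ℂ) *ᵥ v) i := by
  have h : Continuous fun U : Matrix.unitaryGroup ι ℂ => (U : Matrix ι ι ℂ) :=
    continuous_subtype_val
  exact (continuous_apply i).comp (h.matrix_mulVec continuous_const)

lemma norm_rotated_le (v : ι → ℂ) (i : ι) (U : Matrix.unitaryGroup ι ℂ) :
    ‖((U : Matrix ι ι ℂ) *ᵥ v) i‖ ≤ ∑ p, ‖v p‖ := by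
  refine (norm_sum_le _ _).trans (Finset.sum_le_sum fun p _ => ?_)
  rw [norm_mul]
  exact mul_le_of_le_one_left (norm_nonneg _) (entry_norm_bound_of_unitary U.2 i p)

lemma integrable_quartic (μ : Measure (Matrix.unitaryGroup ι ℂ)) [IsProbabilityMeasure μ]
    (v : ι → ℂ) (i j k l : ι) : Integrable (quartic v i j k l) μ := by
  have hc : Continuous (quartic v i j k l) :=
    (((continuous_rotated v i).mul (Complex.continuous_conj.comp (continuous_rotated v j))).mul
      (continuous_rotated v k)).mul (Complex.continuous_conj.comp (continuous_rotated v l))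
  refine Integrable.of_bound hc.aestronglyMeasurable
    ((∑ p, ‖v p‖) * (∑ p, ‖v p‖) * (∑ p, ‖v p‖) * (∑ p, ‖v p‖)) (Filter.Eventually.of_forall ?_)
  intro U
  have h := fun a => norm_rotated_le v a U
  simp only [quartic, norm_mul, RCLike.norm_conj]
  have h0 : 0 ≤ ∑ p, ‖v p‖ := Finset.sum_nonneg fun p _ => norm_nonneg _
  gcongr <;> apply h

/-- Left invariance of Haar measure, as a statement about functions of the vector `U v`. -/
lemma integral_rotate (μ : Measure (Matrix.unitaryGroup ι ℂ)) [μ.IsHaarMeasure]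
    (v : ι → ℂ) (V : Matrix.unitaryGroup ι ℂ) (f : (ι → ℂ) → ℂ) :
    ∫ U : Matrix.unitaryGroup ι ℂ, f ((V : Matrix ι ι ℂ) *ᵥ ((U : Matrix ι ι ℂ) *ᵥ v)) ∂μ =
      ∫ U : Matrix.unitaryGroup ι ℂ, f ((U : Matrix ι ι ℂ) *ᵥ v) ∂μ := by
  rw [← integral_mul_left_eq_self (μ := μ)
    (fun U : Matrix.unitaryGroup ι ℂ => f ((U : Matrix ι ι ℂ) *ᵥ v)) V]
  simp [Matrix.mulVec_mulVec]

lemma moment_swap_left (μ : Measure (Matrix.unitaryGroup ι ℂ)) (v : ι → ℂ) (i j k l : ι) :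
    moment μ v i j k l = moment μ v k j i l := by
  unfold moment quartic
  congr 1; ext U; ring

lemma moment_swap_right (μ : Measure (Matrix.unitaryGroup ι ℂ)) (v : ι → ℂ) (i j k l : ι) :
    moment μ v i j k l = moment μ v i l k j := by
  unfold moment quartic
  congr 1; ext U; ring

/-! ### Vanishing of unbalanced moments -/

/-- The diagonal unitary with entry `I` at position `m` and `1` elsewhere. -/
noncomputable def phaseAt (m : ι) : Matrix.unitaryGroup ι ℂ :=
  ⟨Matrix.diagonal fun p => if p = m then Complex.I else 1, by
    rw [Matrix.mem_unitaryGroup_iff, Matrix.star_eq_conjTranspose, Matrix.diagonal_conjTranspose,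
      Matrix.diagonal_mul_diagonal, ← Matrix.diagonal_one]
    congr 1; ext p
    by_cases h : p = m <;> simp [h]⟩

lemma phaseAt_mulVec (m : ι) (w : ι → ℂ) (p : ι) :
    ((phaseAt m : Matrix ι ι ℂ) *ᵥ w) p = (if p = m then Complex.I else 1) * w p := by
  simp [phaseAt, Matrix.mulVec_diagonal]

lemma moment_phase (μ : Measure (Matrix.unitaryGroup ι ℂ)) [μ.IsHaarMeasure]
    (v : ι → ℂ) (i j k l m : ι) :
    moment μ v i j k l = ((if i = m then Complex.I else 1) * conj (if j = m then Complex.I else 1) *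
      (if k = m then Complex.I else 1) * conj (if l = m then Complex.I else 1)) *
        moment μ v i j k l := by
  conv_lhs => unfold moment quartic
  rw [← integral_rotate μ v (phaseAt m) (fun w => w i * conj (w j) * w k * conj (w l))]
  unfold moment
  rw [← integral_const_mul]
  congr 1; ext U
  simp only [phaseAt_mulVec, map_mul, quartic]
  ring

lemma complex_I_ne_one : (Complex.I : ℂ) ≠ 1 := fun h => by simpa using congrArg Complex.re h

/-- A row index that does not occur among the column indices forces the moment to vanish:
the phase `I` at that index multiplies the moment by `I` or `-1`. -/
lemma moment_eq_zero_row (μ : Measure (Matrix.unitaryGroup ι ℂ)) [μ.IsHaarMeasure]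
    (v : ι → ℂ) {i j k l : ι} (hj : j ≠ i) (hl : l ≠ i) : moment μ v i j k l = 0 := by
  have h := moment_phase μ v i j k l i
  by_contra h0
  have h1 := mul_right_cancel₀ h0 ((one_mul _).trans h)
  by_cases hk : k = i <;> simp [hj, hl, hk] at h1
  · have := congrArg Complex.re h1; norm_num at this
  · exact complex_I_ne_one h1.symm

/-- A column index that does not occur among the row indices forces the moment to vanish. -/
lemma moment_eq_zero_col (μ : Measure (Matrix.unitaryGroup ι ℂ)) [μ.IsHaarMeasure]
    (v : ι → ℂ) {i j k l : ι} (hi : i ≠ j) (hk : k ≠ j) : moment μ v i j k l = 0 := by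
  have h := moment_phase μ v i j k l j
  by_contra h0
  have h1 := mul_right_cancel₀ h0 ((one_mul _).trans h)
  by_cases hl : l = j <;> simp [hi, hk, hl] at h1
  · have := congrArg Complex.re h1; norm_num at this
  · have := congrArg Complex.re h1; norm_num at this

/-! ### Values of the balanced moments -/

/-- The reflection in the hyperplane orthogonal to `e i - 2 e j`; its block on the coordinates
`i`, `j` is `!![3/5, 4/5; 4/5, -3/5]`. -/
noncomputable def reflectAt (i j : ι) (hij : i ≠ j) : Matrix.unitaryGroup ι ℂ :=
  ⟨1 - (2 / 5 : ℂ) • Matrix.vecMulVec (Pi.single i 1 - Pi.single j 2 : ι → ℂ)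
      (Pi.single i 1 - Pi.single j 2 : ι → ℂ), by
    set u : ι → ℂ := Pi.single i 1 - Pi.single j 2 with hu
    have hs : star u = u := by
      rw [hu, star_sub, Pi.star_single, Pi.star_single]; simp
    have hd : u ⬝ᵥ u = 5 := by
      simp [hu, dotProduct_sub, hij, hij.symm]; norm_num
    have hsq : Matrix.vecMulVec u u * Matrix.vecMulVec u u = (5 : ℂ) • Matrix.vecMulVec u u := by
      rw [Matrix.vecMulVec_mul_vecMulVec, hd, Matrix.vecMulVec_smul]
    have hstar : star (1 - (2 / 5 : ℂ) • Matrix.vecMulVec u u) =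
        1 - (2 / 5 : ℂ) • Matrix.vecMulVec u u := by
      rw [Matrix.star_eq_conjTranspose, Matrix.conjTranspose_sub, Matrix.conjTranspose_smul,
        Matrix.conjTranspose_vecMulVec, hs]
      simp
    rw [Matrix.mem_unitaryGroup_iff, hstar, sub_mul, mul_sub, mul_sub]
    simp only [one_mul, mul_one, Matrix.smul_mul, Matrix.mul_smul, hsq, smul_smul]
    module⟩

lemma reflectAt_mulVec (i j : ι) (hij : i ≠ j) (w : ι → ℂ) :
    ((reflectAt i j hij : Matrix ι ι ℂ) *ᵥ w) i = (3 / 5) * w i + (4 / 5) * w j := by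
  simp only [reflectAt, Matrix.sub_mulVec, Matrix.one_mulVec, Matrix.smul_mulVec,
    Matrix.vecMulVec_mulVec, Pi.sub_apply, Pi.smul_apply]
  simp [sub_dotProduct, hij]
  ring

/-- Invariance of `∫ |w i|⁴` under `reflectAt`. The coefficients come from expanding
`|3 x + 4 y|⁴`, whose unbalanced terms integrate to zero. -/
lemma moment_reflect (μ : Measure (Matrix.unitaryGroup ι ℂ)) [μ.IsHaarMeasure]
    [IsProbabilityMeasure μ] (v : ι → ℂ) {i j : ι} (hij : i ≠ j) :
    625 * moment μ v i i i i =
      81 * moment μ v i i i i + 256 * moment μ v j j j j + 576 * moment μ v i i j j := by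
  have h : moment μ v i i i i = ∫ U, ((81 / 625) * quartic v i i i i U +
      (216 / 625) * quartic v i i i j U + (144 / 625) * quartic v i j i j U +
      (216 / 625) * quartic v i i j i U + (576 / 625) * quartic v i i j j U +
      (384 / 625) * quartic v i j j j U + (144 / 625) * quartic v j i j i U +
      (384 / 625) * quartic v j i j j U + (256 / 625) * quartic v j j j j U) ∂μ := by
    unfold moment quartic
    rw [← integral_rotate μ v (reflectAt i j hij) (fun w => w i * conj (w i) * w i * conj (w i))]
    congr 1; ext U
    simp only [reflectAt_mulVec, map_add, map_mul, map_div₀, map_ofNat]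
    ring
  have hI := fun (c : ℂ) a b d e => (integrable_quartic μ v a b d e).const_mul c
  repeat rw [integral_add (by repeat' first | apply hI | apply Integrable.add) (hI _ _ _ _ _)] at h
  simp only [integral_const_mul] at h
  have hm : ∀ a b d e, ∫ U, quartic v a b d e U ∂μ = moment μ v a b d e := fun _ _ _ _ => rfl
  simp only [hm] at h
  have h1 : moment μ v i i i j = 0 := by
    rw [moment_swap_right]; exact moment_eq_zero_col μ v hij hij
  have h2 : moment μ v i j i j = 0 := moment_eq_zero_row μ v hij.symm hij.symm
  have h3 : moment μ v i i j i = 0 := by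
    rw [moment_swap_left]; exact moment_eq_zero_row μ v hij hij
  have h4 : moment μ v i j j j = 0 := moment_eq_zero_row μ v hij.symm hij.symm
  have h5 : moment μ v j i j i = 0 := moment_eq_zero_row μ v hij hij
  have h6 : moment μ v j i j j = 0 := moment_eq_zero_col μ v hij.symm hij.symm
  rw [h1, h2, h3, h4, h5, h6] at h
  linear_combination 625 * h

/-- Subtracting the reflection identities for `(i, j)` and `(j, i)` leaves a nonzero multiple of the
difference of the two diagonal moments, so no permutation unitaries are needed. -/
lemma moment_diag_eq (μ : Measure (Matrix.unitaryGroup ι ℂ)) [μ.IsHaarMeasure]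
    [IsProbabilityMeasure μ] (v : ι → ℂ) (i j : ι) :
    moment μ v i i i i = moment μ v j j j j := by
  by_cases hij : i = j
  · rw [hij]
  have h1 := moment_reflect μ v hij
  have h2 := moment_reflect μ v (Ne.symm hij)
  have h3 : moment μ v j j i i = moment μ v i i j j := by
    rw [moment_swap_left, moment_swap_right]
  rw [h3] at h2
  linear_combination (h1 - h2) / 800

lemma moment_diag_eq_two_mul (μ : Measure (Matrix.unitaryGroup ι ℂ)) [μ.IsHaarMeasure]
    [IsProbabilityMeasure μ] (v : ι → ℂ) {i j : ι} (hij : i ≠ j) :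
    moment μ v i i i i = 2 * moment μ v i i j j := by
  have h1 := moment_reflect μ v hij
  rw [moment_diag_eq μ v j i] at h1
  linear_combination h1 / 288

lemma sum_rotated_mul_conj (v : ι → ℂ) (hv : v ⬝ᵥ star v = 1) (U : Matrix.unitaryGroup ι ℂ) :
    ∑ i, ((U : Matrix ι ι ℂ) *ᵥ v) i * conj (((U : Matrix ι ι ℂ) *ᵥ v) i) = 1 := by
  have h : ((U : Matrix ι ι ℂ) *ᵥ v) ⬝ᵥ star ((U : Matrix ι ι ℂ) *ᵥ v) = 1 := by
    rw [Matrix.star_mulVec, dotProduct_comm, ← Matrix.dotProduct_mulVec, Matrix.mulVec_mulVec,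
      ← Matrix.star_eq_conjTranspose, Matrix.mem_unitaryGroup_iff'.1 U.2, Matrix.one_mulVec,
      dotProduct_comm, hv]
  exact h

/-- The moments `∫ |w i|² |w j|²` sum to `∫ ‖w‖⁴ = 1`. -/
lemma sum_moment (μ : Measure (Matrix.unitaryGroup ι ℂ)) [IsProbabilityMeasure μ]
    (v : ι → ℂ) (hv : v ⬝ᵥ star v = 1) : ∑ i, ∑ j, moment μ v i i j j = 1 := by
  unfold moment
  simp_rw [← integral_finsetSum _ fun j _ => integrable_quartic μ v _ _ j j]
  rw [← integral_finsetSum _ fun i _ => integrable_finsetSum _ fun j _ =>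
    integrable_quartic μ v i i j j]
  have h : ∀ U : Matrix.unitaryGroup ι ℂ, ∑ i, ∑ j, quartic v i i j j U = 1 := by
    intro U
    have h1 := sum_rotated_mul_conj v hv U
    calc ∑ i, ∑ j, quartic v i i j j U
        = (∑ i, ((U : Matrix ι ι ℂ) *ᵥ v) i * conj (((U : Matrix ι ι ℂ) *ᵥ v) i)) *
          ∑ i, ((U : Matrix ι ι ℂ) *ᵥ v) i * conj (((U : Matrix ι ι ℂ) *ᵥ v) i) := by
          rw [Finset.sum_mul_sum]
          simp only [quartic, mul_assoc]
      _ = 1 := by rw [h1, one_mul]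
  simp [h]

lemma moment_diag (μ : Measure (Matrix.unitaryGroup ι ℂ)) [μ.IsHaarMeasure]
    [IsProbabilityMeasure μ] (v : ι → ℂ) (hv : v ⬝ᵥ star v = 1) (i : ι) :
    moment μ v i i i i = 2 / ((Fintype.card ι : ℂ) * (Fintype.card ι + 1)) := by
  set a := moment μ v i i i i with ha
  have h : ∀ p q, moment μ v p p q q = a / 2 * (1 + if p = q then 1 else 0) := by
    intro p q
    rw [ha, moment_diag_eq μ v i p]
    by_cases hpq : p = q
    · subst hpq; simp only [if_true]; ring
    · rw [moment_diag_eq_two_mul μ v hpq]; simp [hpq]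
  have hs := sum_moment μ v hv
  simp only [h, ← Finset.mul_sum, Finset.sum_add_distrib, Finset.sum_ite_eq, Finset.mem_univ,
    if_true, Finset.sum_const, Finset.card_univ, nsmul_eq_mul, mul_one] at hs
  have hD : (Fintype.card ι : ℂ) ≠ 0 := by
    have : Nonempty ι := ⟨i⟩
    exact_mod_cast Fintype.card_ne_zero
  have hD1 : (Fintype.card ι : ℂ) + 1 ≠ 0 := by exact_mod_cast Nat.succ_ne_zero (Fintype.card ι)
  rw [eq_div_iff (mul_ne_zero hD hD1)]
  linear_combination 2 * hs

/-- The second moment of a Haar-random pure state is the normalized projector onto the symmetric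
subspace of two copies. -/
lemma moment_formula (μ : Measure (Matrix.unitaryGroup ι ℂ)) [μ.IsHaarMeasure]
    [IsProbabilityMeasure μ] (v : ι → ℂ) (hv : v ⬝ᵥ star v = 1) (i j k l : ι) :
    moment μ v i j k l = ((if i = j ∧ k = l then 1 else 0) + (if i = l ∧ k = j then 1 else 0)) /
      ((Fintype.card ι : ℂ) * (Fintype.card ι + 1)) := by
  -- The case `i = j`; the case `i = l` follows from it by exchanging `j` and `l`.
  have key : ∀ i k l, moment μ v i i k l =
      ((if k = l then 1 else 0) + (if i = l ∧ k = i then 1 else 0)) /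
        ((Fintype.card ι : ℂ) * (Fintype.card ι + 1)) := by
    intro i k l
    by_cases hkl : k = l
    · subst hkl
      have hd := moment_diag μ v hv i
      by_cases hik : i = k
      · subst hik; rw [hd]; norm_num
      · have h2 := moment_diag_eq_two_mul μ v hik
        simp only [hik, Ne.symm hik, if_true, false_and, if_false, add_zero]
        linear_combination (hd - h2) / 2
    · have hz : moment μ v i i k l = 0 := by
        by_cases hki : k = i
        · subst hki
          rw [moment_swap_right]
          exact moment_eq_zero_col μ v hkl hkl
        · rw [moment_swap_left]
          exact moment_eq_zero_row μ v (Ne.symm hki) (Ne.symm hkl)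
      have hn : ¬(i = l ∧ k = i) := fun h => hkl (h.2.trans h.1)
      simp [hz, hkl, hn]
  by_cases hij : i = j
  · subst hij; rw [key]; simp
  · by_cases hil : i = l
    · subst hil
      rw [moment_swap_right, key]
      simp [hij]
    · rw [moment_eq_zero_row μ v (Ne.symm hij) (Ne.symm hil)]
      simp [hij, hil]

/-! ### Pure states and partial traces -/

/-- A density matrix of purity one is the projector onto a unit vector: its eigenvalues are
nonnegative with `∑ x = ∑ x² = 1`, so exactly one of them is nonzero. -/
lemma exists_pure_vector (ρ : Matrix ι ι ℂ) (hρ : ρ.PosSemidef) (ht : ρ.trace = 1)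
    (hp : (ρ * ρ).trace = 1) :
    ∃ v : ι → ℂ, v ⬝ᵥ star v = 1 ∧ ρ = Matrix.vecMulVec v (star v) := by
  have hH := hρ.1
  set x := hH.eigenvalues with hx
  set W : Matrix ι ι ℂ := (hH.eigenvectorUnitary : Matrix ι ι ℂ) with hW
  have hWW : star W * W = 1 := Matrix.mem_unitaryGroup_iff'.1 hH.eigenvectorUnitary.2
  have hspec : ρ = W * Matrix.diagonal (fun i => (x i : ℂ)) * star W := by
    have h := hH.spectral_theorem
    rw [Unitary.conjStarAlgAut_apply] at h
    exact h
  have hnn : ∀ i, 0 ≤ x i := hρ.eigenvalues_nonneg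
  have hs1 : ∑ i, x i = 1 := by
    have h := hH.trace_eq_sum_eigenvalues
    rw [ht] at h
    apply Complex.ofReal_injective
    rw [Complex.ofReal_sum, Complex.ofReal_one]
    exact h.symm
  have hs2 : ∑ i, x i * x i = 1 := by
    have h : ρ * ρ = W * Matrix.diagonal (fun i => (x i : ℂ) * x i) * star W := by
      rw [← Matrix.diagonal_mul_diagonal]
      conv_lhs => rw [hspec]
      calc W * Matrix.diagonal (fun i => (x i : ℂ)) * star W *
            (W * Matrix.diagonal (fun i => (x i : ℂ)) * star W)
          = W * Matrix.diagonal (fun i => (x i : ℂ)) * (star W * W) *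
            Matrix.diagonal (fun i => (x i : ℂ)) * star W := by simp only [mul_assoc]
        _ = _ := by rw [hWW, mul_one]; simp only [mul_assoc]
    rw [h, Matrix.trace_mul_comm, ← mul_assoc, hWW, one_mul, Matrix.trace_diagonal] at hp
    exact_mod_cast hp
  have hle : ∀ i, x i ≤ 1 := fun i => by
    rw [← hs1]; exact Finset.single_le_sum (fun j _ => hnn j) (Finset.mem_univ i)
  have hz : ∀ i, x i * (1 - x i) = 0 := by
    have h0 : ∑ i, x i * (1 - x i) = 0 := by
      simp only [mul_sub, mul_one, Finset.sum_sub_distrib, hs1, hs2, sub_self]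
    intro i
    exact (Finset.sum_eq_zero_iff_of_nonneg fun j _ =>
      mul_nonneg (hnn j) (sub_nonneg.2 (hle j))).1 h0 i (Finset.mem_univ i)
  obtain ⟨m, hm⟩ : ∃ m, x m ≠ 0 := by
    by_contra! h
    simp [h] at hs1
  have hm1 : x m = 1 := by
    have := (mul_eq_zero.1 (hz m)).resolve_left hm
    linarith
  have hrest : ∀ i, i ≠ m → x i = 0 := by
    have h0 : ∑ i ∈ Finset.univ.erase m, x i = 0 := by
      have := Finset.add_sum_erase Finset.univ x (Finset.mem_univ m)
      linarith
    intro i hi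
    exact (Finset.sum_eq_zero_iff_of_nonneg fun j _ => hnn j).1 h0 i (by simp [hi])
  have hxe : ∀ i, x i = if i = m then 1 else 0 := by
    intro i
    by_cases hi : i = m
    · simp [hi, hm1]
    · simp [hi, hrest i hi]
  refine ⟨fun i => W i m, ?_, ?_⟩
  · have h := congrFun (congrFun hWW m) m
    rw [Matrix.mul_apply, Matrix.one_apply_eq] at h
    rw [← h, dotProduct]
    simp [mul_comm]
  · rw [hspec]
    ext i j
    simp [Matrix.mul_apply, Matrix.diagonal_apply, hxe, Matrix.vecMulVec_apply,
      apply_ite Complex.ofReal]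

end HaarMoments

lemma mergeQ_inj {n : ℕ} (S : Finset (Fin n)) (a b : {i : Fin n // i ∈ S} → Fin 2)
    (c d : {i : Fin n // i ∉ S} → Fin 2) : mergeQ S a c = mergeQ S b d ↔ a = b ∧ c = d := by
  constructor
  · intro h
    refine ⟨funext fun i => ?_, funext fun i => ?_⟩
    · simpa [mergeQ, i.2] using congrFun h i.1
    · simpa [mergeQ, i.2] using congrFun h i.1
  · rintro ⟨rfl, rfl⟩; rfl

/-- The reduced purity of a rotated pure state as a sum of quartic monomials. -/
lemma trace_ptraceCompl_sq {n : ℕ} (S : Finset (Fin n)) (v : QubitBasis n → ℂ)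
    (U : Matrix.unitaryGroup (QubitBasis n) ℂ) :
    (ptraceCompl S ((U : Matrix (QubitBasis n) (QubitBasis n) ℂ) * Matrix.vecMulVec v (star v) *
          star (U : Matrix (QubitBasis n) (QubitBasis n) ℂ)) *
        ptraceCompl S ((U : Matrix (QubitBasis n) (QubitBasis n) ℂ) * Matrix.vecMulVec v (star v) *
          star (U : Matrix (QubitBasis n) (QubitBasis n) ℂ))).trace =
      ∑ a, ∑ b, ∑ c, ∑ d,
        quartic v (mergeQ S a c) (mergeQ S b c) (mergeQ S b d) (mergeQ S a d) U := by
  rw [Matrix.mul_vecMulVec, Matrix.vecMulVec_mul, Matrix.star_eq_conjTranspose,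
    ← Matrix.star_mulVec]
  simp only [Matrix.trace, Matrix.diag, Matrix.mul_apply, ptraceCompl, Matrix.of_apply,
    Finset.sum_mul_sum, Matrix.vecMulVec_apply, quartic, Pi.star_apply, mul_assoc]
  rfl

/-- For an `n`-qubit system, a subset `S_κ` of `n_κ` qubits, the
normalized Haar probability measure `μ` on `U(2ⁿ)`, and any pure-state density matrix
`ρ₀` on `n` qubits, the average purity of the reduced state satisfies
`∫ Tr[(Tr_{S̄_κ}[U ρ₀ U†])²] dμ(U) = (2^{n−n_κ} + 2^{n_κ})/(2ⁿ + 1)`. -/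
theorem haar_average_reduced_purity
    (n nκ : ℕ) (Sκ : Finset (Fin n)) (hκ : Sκ.card = nκ)
    (μ : Measure (Matrix.unitaryGroup (QubitBasis n) ℂ))
    [μ.IsHaarMeasure] [IsProbabilityMeasure μ]
    (ρ₀ : Matrix (QubitBasis n) (QubitBasis n) ℂ)
    (hρ : ρ₀.PosSemidef) (hρt : ρ₀.trace = 1) (hpure : (ρ₀ * ρ₀).trace = 1) :
    ∫ U : Matrix.unitaryGroup (QubitBasis n) ℂ,
        (ptraceCompl Sκ ((U : Matrix (QubitBasis n) (QubitBasis n) ℂ) * ρ₀ *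
            star (U : Matrix (QubitBasis n) (QubitBasis n) ℂ)) *
          ptraceCompl Sκ ((U : Matrix (QubitBasis n) (QubitBasis n) ℂ) * ρ₀ *
            star (U : Matrix (QubitBasis n) (QubitBasis n) ℂ))).trace ∂μ
      = ((2 : ℂ) ^ (n - nκ) + (2 : ℂ) ^ nκ) / ((2 : ℂ) ^ n + 1) := by
  obtain ⟨v, hv, rfl⟩ := exists_pure_vector ρ₀ hρ hρt hpure
  simp_rw [trace_ptraceCompl_sq]
  have hI := integrable_quartic μ v
  rw [integral_finsetSum _ fun a _ => integrable_finsetSum _ fun b _ =>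
    integrable_finsetSum _ fun c _ => integrable_finsetSum _ fun d _ => hI _ _ _ _]
  simp_rw [integral_finsetSum _ fun b _ => integrable_finsetSum _ fun c _ =>
    integrable_finsetSum _ fun d _ => hI (mergeQ Sκ _ c) (mergeQ Sκ b c) (mergeQ Sκ b d)
      (mergeQ Sκ _ d)]
  simp_rw [integral_finsetSum _ fun c _ =>
    integrable_finsetSum _ fun d _ => hI (mergeQ Sκ _ c) (mergeQ Sκ _ c) (mergeQ Sκ _ d)
      (mergeQ Sκ _ d)]
  simp_rw [integral_finsetSum _ fun d _ => hI (mergeQ Sκ _ _) (mergeQ Sκ _ _) (mergeQ Sκ _ d)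
      (mergeQ Sκ _ d)]
  have hm : ∀ i j k l, ∫ U, quartic v i j k l U ∂μ = moment μ v i j k l := fun _ _ _ _ => rfl
  have hf : ∀ (a b : {i : Fin n // i ∈ Sκ} → Fin 2) (c d : {i : Fin n // i ∉ Sκ} → Fin 2),
      moment μ v (mergeQ Sκ a c) (mergeQ Sκ b c) (mergeQ Sκ b d) (mergeQ Sκ a d) =
        ((if a = b then 1 else 0) + (if c = d then 1 else 0)) /
          ((Fintype.card (QubitBasis n) : ℂ) * (Fintype.card (QubitBasis n) + 1)) := by
    intro a b c d
    rw [moment_formula μ v hv]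
    congr 2
    · by_cases h : a = b <;> simp [mergeQ_inj, h]
    · by_cases h : c = d <;> simp [mergeQ_inj, h]
  simp only [hm, hf, ← Finset.sum_div, Finset.sum_add_distrib, Finset.sum_ite_eq,
    Finset.mem_univ, if_true, Finset.sum_const, Finset.card_univ, nsmul_eq_mul, mul_one,
    ← Finset.mul_sum]
  have hle : nκ ≤ n := by
    rw [← hκ]; simpa using Finset.card_le_univ Sκ
  have hA : Fintype.card ({i : Fin n // i ∈ Sκ} → Fin 2) = 2 ^ nκ := by
    simp [hκ]
  have hB : Fintype.card ({i : Fin n // i ∉ Sκ} → Fin 2) = 2 ^ (n - nκ) := by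
    simp [Fintype.card_subtype_compl, hκ]
  have hD : Fintype.card (QubitBasis n) = 2 ^ n := by simp
  have hpow : (2 : ℂ) ^ n = 2 ^ nκ * 2 ^ (n - nκ) := by
    rw [← pow_add, Nat.add_sub_cancel' hle]
  have hD1 : (2 : ℂ) ^ n + 1 ≠ 0 := by exact_mod_cast Nat.succ_ne_zero (2 ^ n)
  rw [hA, hB, hD]
  push_cast
  rw [hpow] at hD1 ⊢
  field_simp
end

section
/- Consider an n-qubit system, a subset S_W of m qubits, and a subset S_κ ⊆ S_W of n_κ qubits. Let μ be the normalized Haar probability measure on U(2^m), and for a unitary W ∈ U(2^m) let W̃ denote the n-qubit unitary acting as W on the qubits in S_W and as the identity elsewhere. For any density matrices ρ and σ on n qubits, ∫ Tr[Tr_{S̄_κ}[W̃ ρ W̃†]·Tr_{S̄_κ}[σ]] dμ(W) = 1/2^{n_κ}. (This yields the expectation value 1/2^{n_κ} of the projected quantum kernel for alternating layered ansatzes whose last-layer block containing S_κ is Haar random, as in Theorem 1.) -/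
/-!
Left invariance of the Haar measure forces `∫ W R W† dμ` to be the scalar matrix with the same trace
as `R`, namely `(tr R / |ι|) • 1` (`integral_conj_entry`).  Each entry of `W̃ ρ W̃†` is an entry of
such a conjugate, with `R` the block of `ρ` picked out by the configurations off `S_W`
(`embedQ_conj_apply`).  Since `S_κ ⊆ S_W`, the entry `(a, b)` of the averaged reduced state on `S_κ`
therefore vanishes for `a ≠ b` and takes a common value `T` for `a = b`; trace one gives
`T = 1 / 2 ^ n_κ`.  Pairing `T • 1` with the reduced state of `σ`, which has trace one, gives `T`.
-/

open MeasureTheory Matrix ComplexOrder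

/-- Every basis state splits uniquely into its parts on `S` and off `S`. -/
def mergeEquiv {n : ℕ} (S : Finset (Fin n)) :
    (({i : Fin n // i ∈ S} → Fin 2) × ({i : Fin n // i ∉ S} → Fin 2)) ≃ QubitBasis n where
  toFun p := mergeQ S p.1 p.2
  invFun x := (fun i => x i.1, fun i => x i.1)
  left_inv p := by
    refine Prod.ext (funext fun i => ?_) (funext fun i => ?_)
    · simp [mergeQ, i.2]
    · simp [mergeQ, i.2]
  right_inv x := by
    funext i
    by_cases h : i ∈ S <;> simp [mergeQ, h]

lemma sum_mergeQ {n : ℕ} (S : Finset (Fin n)) (f : QubitBasis n → ℂ) :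
    ∑ x, f x = ∑ a, ∑ c, f (mergeQ S a c) := by
  rw [← (mergeEquiv S).sum_comp, Fintype.sum_prod_type]
  rfl

lemma trace_ptraceCompl {n : ℕ} (S : Finset (Fin n))
    (A : Matrix (QubitBasis n) (QubitBasis n) ℂ) : (ptraceCompl S A).trace = A.trace := by
  simp only [Matrix.trace, Matrix.diag, sum_mergeQ S]
  rfl

lemma continuous_conj_entry {ι : Type*} [Fintype ι] [DecidableEq ι]
    (R : Matrix ι ι ℂ) (x y : ι) :
    Continuous fun W : Matrix.unitaryGroup ι ℂ =>
      ((W : Matrix ι ι ℂ) * R * star (W : Matrix ι ι ℂ)) x y := by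
  have h : Continuous fun W : Matrix.unitaryGroup ι ℂ =>
      ((W : Matrix ι ι ℂ) * R * (W : Matrix ι ι ℂ)ᴴ) :=
    (continuous_subtype_val.matrix_mul continuous_const).matrix_mul
      continuous_subtype_val.matrix_conjTranspose
  exact h.matrix_elem x y

/-- Entries of a unitary are bounded by one, hence each entry of `W R W†` is bounded. -/
lemma integrable_conj_entry {ι : Type*} [Fintype ι] [DecidableEq ι]
    (μ : Measure (Matrix.unitaryGroup ι ℂ)) [IsProbabilityMeasure μ]
    (R : Matrix ι ι ℂ) (x y : ι) :
    Integrable (fun W : Matrix.unitaryGroup ι ℂ =>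
      ((W : Matrix ι ι ℂ) * R * star (W : Matrix ι ι ℂ)) x y) μ := by
  refine Integrable.of_bound (C := ∑ b, ∑ a, ‖R a b‖)
    (continuous_conj_entry R x y).measurable.aestronglyMeasurable
    (Filter.Eventually.of_forall fun W => ?_)
  rw [Matrix.mul_apply]
  refine (norm_sum_le _ _).trans (Finset.sum_le_sum fun b _ => ?_)
  rw [Matrix.mul_apply, Finset.sum_mul]
  refine (norm_sum_le _ _).trans (Finset.sum_le_sum fun a _ => ?_)
  have h1 := entry_norm_bound_of_unitary W.2 x a
  have h2 := entry_norm_bound_of_unitary W.2 y b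
  rw [norm_mul, norm_mul, Matrix.star_apply, norm_star]
  calc ‖(W : Matrix ι ι ℂ) x a‖ * ‖R a b‖ * ‖(W : Matrix ι ι ℂ) y b‖
      ≤ 1 * ‖R a b‖ * 1 := by gcongr
    _ = ‖R a b‖ := by ring

lemma integral_conj_left {ι : Type*} [Fintype ι] [DecidableEq ι]
    (μ : Measure (Matrix.unitaryGroup ι ℂ)) [μ.IsHaarMeasure]
    (R : Matrix ι ι ℂ) (x y : ι) (V : Matrix.unitaryGroup ι ℂ) :
    ∫ W : Matrix.unitaryGroup ι ℂ, ((W : Matrix ι ι ℂ) * R * star (W : Matrix ι ι ℂ)) x y ∂μ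
      = ∫ W : Matrix.unitaryGroup ι ℂ, ((V : Matrix ι ι ℂ) *
        ((W : Matrix ι ι ℂ) * R * star (W : Matrix ι ι ℂ)) * star (V : Matrix ι ι ℂ)) x y ∂μ := by
  rw [← integral_mul_left_eq_self _ V]
  simp only [Matrix.UnitaryGroup.mul_val, star_mul, Matrix.mul_assoc]

/-- First-moment formula: averaging `W R W†` over the Haar measure yields the scalar matrix
`(tr R / |ι|) • 1`.  Sign flips of one basis vector kill the off-diagonal entries, and
transpositions make the diagonal entries equal. -/
lemma integral_conj_entry {ι : Type*} [Fintype ι] [DecidableEq ι]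
    (μ : Measure (Matrix.unitaryGroup ι ℂ)) [μ.IsHaarMeasure] [IsProbabilityMeasure μ]
    (R : Matrix ι ι ℂ) (x y : ι) :
    ∫ W : Matrix.unitaryGroup ι ℂ, ((W : Matrix ι ι ℂ) * R * star (W : Matrix ι ι ℂ)) x y ∂μ
      = if x = y then R.trace / (Fintype.card ι : ℂ) else 0 := by
  split_ifs with hxy
  · subst hxy
    have hdiag : ∀ z, ∫ W : Matrix.unitaryGroup ι ℂ,
        ((W : Matrix ι ι ℂ) * R * star (W : Matrix ι ι ℂ)) z z ∂μ
        = ∫ W : Matrix.unitaryGroup ι ℂ,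
          ((W : Matrix ι ι ℂ) * R * star (W : Matrix ι ι ℂ)) x x ∂μ := by
      intro z
      let P : Matrix ι ι ℂ := (Equiv.swap z x).toPEquiv.toMatrix
      have hstar : star P = (Equiv.swap z x).toPEquiv.toMatrix := by
        ext i j
        simp only [P, Matrix.star_apply, PEquiv.toMatrix_apply, Equiv.toPEquiv_apply,
          Option.mem_def, Option.some.injEq]
        have : Equiv.swap z x j = i ↔ Equiv.swap z x i = j := by
          rw [← Equiv.eq_symm_apply, Equiv.symm_swap, eq_comm]
        by_cases h : Equiv.swap z x i = j <;> simp [this, h]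
      have hP : P ∈ Matrix.unitaryGroup ι ℂ := by
        rw [Matrix.mem_unitaryGroup_iff, hstar, ← PEquiv.toMatrix_trans,
          ← Equiv.toPEquiv_trans]
        simp
      rw [integral_conj_left μ R z z ⟨P, hP⟩]
      congr 1
      funext W
      change (P * ((W : Matrix ι ι ℂ) * R * star (W : Matrix ι ι ℂ)) * star P) z z = _
      rw [hstar, PEquiv.mul_toMatrix_toPEquiv, PEquiv.toMatrix_toPEquiv_mul]
      simp
    have hsum : ∑ z, ∫ W : Matrix.unitaryGroup ι ℂ,
        ((W : Matrix ι ι ℂ) * R * star (W : Matrix ι ι ℂ)) z z ∂μ = R.trace := by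
      rw [← integral_finsetSum _ fun z _ => integrable_conj_entry μ R z z]
      have : ∀ W : Matrix.unitaryGroup ι ℂ,
          ∑ z, ((W : Matrix ι ι ℂ) * R * star (W : Matrix ι ι ℂ)) z z = R.trace := by
        intro W
        change Matrix.trace _ = _
        rw [Matrix.trace_mul_comm, ← Matrix.mul_assoc, Matrix.UnitaryGroup.star_mul_self,
          Matrix.one_mul]
      simp [this]
    rw [Finset.sum_congr rfl fun z _ => hdiag z] at hsum
    have hcard : (Fintype.card ι : ℂ) ≠ 0 :=
      Nat.cast_ne_zero.2 (Fintype.card_pos_iff.2 ⟨x⟩).ne'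
    rw [eq_div_iff hcard, ← hsum]
    simp [mul_comm]
  · let D : Matrix ι ι ℂ := Matrix.diagonal fun i => if i = x then -1 else 1
    have hstar : star D = D := by
      simp only [D, Matrix.star_eq_conjTranspose, Matrix.diagonal_conjTranspose]
      congr 1
      funext i
      by_cases h : i = x <;> simp [h]
    have hD : D ∈ Matrix.unitaryGroup ι ℂ := by
      rw [Matrix.mem_unitaryGroup_iff, hstar, Matrix.diagonal_mul_diagonal, ← Matrix.diagonal_one]
      congr 1
      funext i
      by_cases h : i = x <;> simp [h]
    have h := integral_conj_left μ R x y ⟨D, hD⟩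
    have h2 : ∀ A : Matrix ι ι ℂ, (D * A * star D) x y = - A x y := by
      intro A
      rw [hstar, Matrix.mul_diagonal, Matrix.diagonal_mul]
      simp [Ne.symm hxy]
    simp only [h2, integral_neg] at h
    exact self_eq_neg.1 h

/-- An entry of `W̃ ρ W̃†` is an entry of `W R W†`, where `R` is the block of `ρ` selected by the
row and column configurations off `S`. -/
lemma embedQ_conj_apply {n : ℕ} (S : Finset (Fin n))
    (W : Matrix ({i : Fin n // i ∈ S} → Fin 2) ({i : Fin n // i ∈ S} → Fin 2) ℂ)
    (ρ : Matrix (QubitBasis n) (QubitBasis n) ℂ) (x y : QubitBasis n) :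
    (embedQ S W * ρ * star (embedQ S W)) x y
      = (W * (Matrix.of fun p q => ρ (mergeQ S p fun i => x i.1) (mergeQ S q fun i => y i.1))
          * star W) (fun i => x i.1) (fun i => y i.1) := by
  have key : ∀ (z : QubitBasis n) (f : QubitBasis n → ℂ),
      ∑ u, embedQ S W z u * f u
        = ∑ p, W (fun i => z i.1) p * f (mergeQ S p fun i => z i.1) := by
    intro z f
    rw [sum_mergeQ S]
    refine Finset.sum_congr rfl fun p _ => ?_
    have hp : ∀ c, (fun i : {i : Fin n // i ∈ S} => mergeQ S p c i.1) = p := fun c =>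
      congrArg Prod.fst ((mergeEquiv S).left_inv (p, c))
    have hc : ∀ c, (∀ i : {i : Fin n // i ∉ S}, z i.1 = mergeQ S p c i.1)
        ↔ (fun i : {i : Fin n // i ∉ S} => z i.1) = c := by
      intro c
      rw [funext_iff]
      refine forall_congr' fun i => ?_
      simp [mergeQ, i.2]
    simp only [embedQ, Matrix.of_apply, hp, hc, ite_mul, one_mul, zero_mul]
    simp
  have key' : ∀ (z : QubitBasis n) (f : QubitBasis n → ℂ),
      ∑ u, f u * star (embedQ S W z u)
        = ∑ p, f (mergeQ S p fun i => z i.1) * star (W (fun i => z i.1) p) := by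
    intro z f
    have := congrArg star (key z fun u => star (f u))
    simpa [star_sum, mul_comm] using this
  simp only [Matrix.mul_apply, Matrix.star_apply, Matrix.of_apply]
  rw [key' y]
  refine Finset.sum_congr rfl fun q _ => ?_
  rw [key x]

/-- expectation part of Theorem 1.  Consider an `n`-qubit system, a
subset `S_W` of `m` qubits and a subset `S_κ ⊆ S_W` of `n_κ` qubits.  Let `μ` be the
normalized Haar probability measure on `U(2^m)` and, for `W ∈ U(2^m)`, let `W̃` be the
`n`-qubit unitary acting as `W` on `S_W` and as the identity elsewhere.  For any density
matrices `ρ`, `σ` on `n` qubits,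
`∫ Tr[Tr_{S̄_κ}[W̃ ρ W̃†]·Tr_{S̄_κ}[σ]] dμ(W) = 1/2^{n_κ}`. -/
theorem haar_block_expectation_projected_kernel
    (n m nκ : ℕ) (SW Sκ : Finset (Fin n)) (hm : SW.card = m)
    (hκW : Sκ ⊆ SW) (hκ : Sκ.card = nκ)
    (μ : Measure (Matrix.unitaryGroup ({i : Fin n // i ∈ SW} → Fin 2) ℂ))
    [μ.IsHaarMeasure] [IsProbabilityMeasure μ]
    (ρ σ : Matrix (QubitBasis n) (QubitBasis n) ℂ)
    (hρ : ρ.PosSemidef) (hρt : ρ.trace = 1)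
    (hσ : σ.PosSemidef) (hσt : σ.trace = 1) :
    ∫ W : Matrix.unitaryGroup ({i : Fin n // i ∈ SW} → Fin 2) ℂ,
        (ptraceCompl Sκ
            (embedQ SW (W : Matrix ({i : Fin n // i ∈ SW} → Fin 2)
                ({i : Fin n // i ∈ SW} → Fin 2) ℂ) * ρ *
              star (embedQ SW (W : Matrix ({i : Fin n // i ∈ SW} → Fin 2)
                ({i : Fin n // i ∈ SW} → Fin 2) ℂ))) *
          ptraceCompl Sκ σ).trace ∂μ
      = 1 / (2 : ℂ) ^ nκ := by
  classical
  -- the diagonal of the reduced state of `ρ` off `SW`, divided by the dimension of the block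
  let g : ({i : Fin n // i ∉ SW} → Fin 2) → ℂ := fun c =>
    (∑ p, ρ (mergeQ SW p c) (mergeQ SW p c)) /
      (Fintype.card ({i : Fin n // i ∈ SW} → Fin 2) : ℂ)
  let T : ℂ := ∑ c : {i : Fin n // i ∉ Sκ} → Fin 2,
    g fun i => c ⟨i.1, fun h => i.2 (hκW h)⟩
  have hoff : ∀ (a : {i : Fin n // i ∈ Sκ} → Fin 2) (c : {i : Fin n // i ∉ Sκ} → Fin 2),
      (fun i : {i : Fin n // i ∉ SW} => mergeQ Sκ a c i.1)
        = fun i => c ⟨i.1, fun h => i.2 (hκW h)⟩ := by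
    intro a c
    funext i
    have : i.1 ∉ Sκ := fun h => i.2 (hκW h)
    simp [mergeQ, this]
  have hon : ∀ (a b : {i : Fin n // i ∈ Sκ} → Fin 2) (c : {i : Fin n // i ∉ Sκ} → Fin 2),
      (fun i : {i : Fin n // i ∈ SW} => mergeQ Sκ a c i.1) = (fun i => mergeQ Sκ b c i.1)
        ↔ a = b := by
    intro a b c
    refine ⟨fun h => funext fun i => ?_, fun h => by rw [h]⟩
    have := congrFun h ⟨i.1, hκW i.2⟩
    simpa [mergeQ, i.2] using this
  -- summing the same quantity over all configurations of `Sκ` and regrouping along `SW`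
  -- recovers the trace of `ρ`
  have hT : T = 1 / (2 : ℂ) ^ nκ := by
    have h1 : ∑ x : QubitBasis n, g (fun i => x i.1) = (2 : ℂ) ^ nκ * T := by
      rw [sum_mergeQ Sκ]
      simp only [hoff]
      simp [T, hκ]
    have h2 : ∑ x : QubitBasis n, g (fun i => x i.1) = 1 := by
      rw [sum_mergeQ SW]
      have hp : ∀ p c, (fun i : {i : Fin n // i ∉ SW} => mergeQ SW p c i.1) = c := fun p c =>
        congrArg Prod.snd ((mergeEquiv SW).left_inv (p, c))
      simp only [hp, Finset.sum_const, nsmul_eq_mul, Finset.card_univ]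
      have hcard : (Fintype.card ({i : Fin n // i ∈ SW} → Fin 2) : ℂ) ≠ 0 :=
        Nat.cast_ne_zero.2 Fintype.card_ne_zero
      simp only [g]
      rw [← Finset.sum_div, mul_div_cancel₀ _ hcard, Finset.sum_comm, ← sum_mergeQ SW
        (fun x => ρ x x)]
      exact hρt
    rw [eq_div_iff (by positivity), mul_comm, ← h1, h2]
  have hint : ∀ x y : QubitBasis n, Integrable (fun W : Matrix.unitaryGroup
      ({i : Fin n // i ∈ SW} → Fin 2) ℂ => (embedQ SW (W : Matrix _ _ ℂ) * ρ *
        star (embedQ SW (W : Matrix _ _ ℂ))) x y) μ := by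
    intro x y
    simp only [embedQ_conj_apply]
    exact integrable_conj_entry μ _ _ _
  have hred : ∀ a b, ∫ W : Matrix.unitaryGroup ({i : Fin n // i ∈ SW} → Fin 2) ℂ,
      ptraceCompl Sκ (embedQ SW (W : Matrix _ _ ℂ) * ρ *
        star (embedQ SW (W : Matrix _ _ ℂ))) a b ∂μ = if a = b then T else 0 := by
    intro a b
    simp only [ptraceCompl, Matrix.of_apply]
    rw [integral_finsetSum _ fun c _ => hint _ _]
    simp only [embedQ_conj_apply, integral_conj_entry, hon, hoff]
    split_ifs with hab
    · rfl
    · simp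
  have hredint : ∀ a b, Integrable (fun W : Matrix.unitaryGroup
      ({i : Fin n // i ∈ SW} → Fin 2) ℂ => ptraceCompl Sκ (embedQ SW (W : Matrix _ _ ℂ) * ρ *
        star (embedQ SW (W : Matrix _ _ ℂ))) a b) μ := fun a b =>
    integrable_finsetSum _ fun c _ => hint _ _
  simp only [Matrix.trace, Matrix.diag, Matrix.mul_apply (M := ptraceCompl _ _)]
  rw [integral_finsetSum _ fun a _ => integrable_finsetSum _ fun b _ =>
    (hredint a b).mul_const _]
  have hstep : ∀ a, ∫ W : Matrix.unitaryGroup ({i : Fin n // i ∈ SW} → Fin 2) ℂ,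
      ∑ b, ptraceCompl Sκ (embedQ SW (W : Matrix _ _ ℂ) * ρ *
        star (embedQ SW (W : Matrix _ _ ℂ))) a b * ptraceCompl Sκ σ b a ∂μ
      = T * ptraceCompl Sκ σ a a := by
    intro a
    rw [integral_finsetSum _ fun b _ => (hredint a b).mul_const _]
    simp only [integral_mul_const, hred]
    simp
  rw [Finset.sum_congr rfl fun a _ => hstep a, ← Finset.mul_sum]
  have hσ' : ∑ a, ptraceCompl Sκ σ a a = 1 := (trace_ptraceCompl Sκ σ).trans hσt
  rw [hσ', mul_one, hT]
end
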